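/- arXiv:math/0511253 — 2 statements merged into one kernel-verified Lean document; each statement's English description precedes it below -/
import Mathlib

section
/- For every k ≥ 1, the sum of all entries of the Weingarten matrix W_{k2} = G_{k2}⁻¹ equals 1/(k+1): ∑_{p,q ∈ D(k)} W_{k2}(p,q) = 1/(k+1). (These are the even moments ∫ u₁₁^{2k} of a generator of A_o(2), whose square thus has the uniform law on [0,1].) -/
open scoped BigOperators

/-- Non-crossing pair partitions of {1,…,2k}: fixed-point-free non-crossing
involutions of `Fin (2*k)`. -/
def NCPair (k : ℕ) : Type :=
  {p : Equiv.Perm (Fin (2 * k)) //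
    (∀ x, p (p x) = x) ∧ (∀ x, p x ≠ x) ∧
    ∀ a b c d : Fin (2 * k), a < b → b < c → c < d → p a = c → p b = d → False}

instance (k : ℕ) : Fintype (NCPair k) := by unfold NCPair; infer_instance

instance (k : ℕ) : DecidableEq (NCPair k) := by unfold NCPair; infer_instance

/-- `loops p q`: the number of loops obtained by closing the composed diagram,
i.e. the number of orbits of the subgroup generated by `p` and `q` on `Fin (2*k)`. -/
noncomputable def loops {k : ℕ} (p q : NCPair k) : ℕ :=
  Nat.card (MulAction.orbitRel.Quotient
    (↥(Subgroup.closure ({p.1, q.1} : Set (Equiv.Perm (Fin (2 * k)))))) (Fin (2 * k)))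

/-- The Gram matrix `G_{kn}(p,q) = n^{l(p,q)}`. -/
noncomputable def Gram (k n : ℕ) : Matrix (NCPair k) (NCPair k) ℝ :=
  fun p q => (n : ℝ) ^ loops p q

/-- The loop distance `d(p,q) = k - l(p,q)`. -/
noncomputable def loopDist {k : ℕ} (p q : NCPair k) : ℕ := k - loops p q

/-!
Colour the `2k` points with two colours, and send a pairing to the indicator of the colourings that
are constant on its pairs, a vector of `(ℝ²)^{⊗2k}`. The Gram matrix `G` is the matrix of scalar
products of the vectors of the non-crossing pairings. These are linearly independent: evaluated at a
colouring determined by the openers of `p`, the vector of `q` can be nonzero only if `q = p` or the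
arcs of `q` have a larger total length than those of `p`.

Let `v` be the sum of the vectors of all pairings, crossing or not, of the odd points with the even
ones. Up to signs these vectors are products of `2 × 2` determinants, so the Plücker relation
resolves their crossings and `v = ∑ c_q q` for non-crossing `q`. If `p` pairs odd points with even
ones, then the other such pairings correspond to the permutations `s` of `k` points, and the scalar
product of `p` and `v` counts the pairs of an `s` and an `s`-invariant subset of the `k` points.
A subset with `m` elements is invariant under `m! (k - m)!` permutations, so the count is
`∑ (k choose m) m! (k - m)! = (k + 1)!`. Thus `G c` is the constant vector `(k + 1)!`, while
`∑ c_q = k!` on evaluating `v` at a constant colouring, and the entries of `G⁻¹` sum to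
`k! / (k + 1)!`.
-/

section Pairings

open Equiv

variable {α : Type*}

/-- A pair partition of `α`, encoded as the fixed-point-free involution exchanging the two
elements of each pair. -/
structure IsPairing (p : Perm α) : Prop where
  involutive : Function.Involutive p
  apply_ne (x : α) : p x ≠ x

/-- The permutation `p` exchanges the predicate `P` with its negation. For a pairing this says that
each pair has exactly one element satisfying `P`. -/
def Alternates (P : α → Prop) (p : Perm α) : Prop :=
  ∀ x, P (p x) ↔ ¬ P x

theorem Alternates.isPairing {P : α → Prop} {p : Perm α} (h : Alternates P p)
    (hp : Function.Involutive p) : IsPairing p where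
  involutive := hp
  apply_ne x hx := by simpa [hx] using h x

theorem IsPairing.even_card {p : Perm α} (hp : IsPairing p) {s : Finset α}
    (hs : ∀ x ∈ s, p x ∈ s) : Even s.card := by
  have hsum : ∑ _ ∈ s, (1 : ZMod 2) = 0 :=
    Finset.sum_involution (fun x _ => p x) (fun _ _ => by decide) (fun x _ _ => hp.apply_ne x)
      hs fun x _ => hp.involutive x
  rw [← ZMod.natCast_eq_zero_iff_even]
  simpa using hsum

variable [LinearOrder α]

/-- The element `x` is the smaller one of its pair. -/
abbrev IsOpener (p : Perm α) (x : α) : Prop :=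
  x < p x

theorem IsPairing.alternates_isOpener {p : Perm α} (hp : IsPairing p) :
    Alternates (IsOpener p) p := by
  intro x
  rw [IsOpener, hp.involutive x, not_lt]
  exact ⟨le_of_lt, fun h => h.lt_of_ne (hp.apply_ne x)⟩

/-- A non-crossing pair partition. -/
structure IsNonCrossing (p : Perm α) : Prop extends IsPairing p where
  apply_ne_of_lt (a b c d : α) : a < b → b < c → c < d → p a = c → p b ≠ d

/-- The parity predicate on the points; on `{1, …, 2k}` it singles out the odd ones. -/
abbrev EvenVal {n : ℕ} (x : Fin n) : Prop :=
  Even (x : ℕ)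

namespace IsNonCrossing

variable {p q : Perm α}

theorem apply_mem_Ioo (hp : IsNonCrossing p) {x y : α} (hy : y ∈ Set.Ioo x (p x)) :
    p y ∈ Set.Ioo x (p x) := by
  obtain ⟨hxy, hyx⟩ := hy
  have hne_left : p y ≠ x := by
    rintro rfl
    exact hyx.ne (hp.involutive y).symm
  have hne_right : p y ≠ p x := p.injective.ne hxy.ne'
  constructor
  · by_contra! h
    exact hp.apply_ne_of_lt _ _ _ _ (h.lt_of_ne hne_left) hxy hyx (hp.involutive y) rfl
  · by_contra! h
    exact hp.apply_ne_of_lt _ _ _ _ hxy hyx (h.lt_of_ne hne_right.symm) rfl rfl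

/-- If `c` is the first closer at which `p` and `q` differ and `p c < q c`, then the `p`-partner of
`q c` is an earlier closer, at which `q` must disagree with `p` too. -/
theorem not_lt_of_agree_below (hp : IsNonCrossing p) (hq : IsPairing q)
    (hop : ∀ x, x < p x ↔ x < q x) {c : α} (hc : q c < c)
    (hagree : ∀ x < c, p x < x → p x = q x) : ¬ p c < q c := by
  intro hlt
  have hopen : q c < p (q c) := (hop _).2 (by rwa [hq.involutive c])
  have hmem : q c ∈ Set.Ioo (p c) (p (p c)) := ⟨hlt, by rwa [hp.involutive c]⟩
  have hbelow : p (q c) < c := by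
    simpa only [hp.involutive c] using (hp.apply_mem_Ioo hmem).2
  have heq := hagree (p (q c)) hbelow (by rwa [hp.involutive])
  rw [hp.involutive] at heq
  exact hbelow.ne (q.injective heq).symm

theorem eq_of_isOpener_iff [WellFoundedLT α] (hp : IsNonCrossing p) (hq : IsNonCrossing q)
    (hop : ∀ x, x < p x ↔ x < q x) : p = q := by
  have hcl : ∀ x, p x < x ↔ q x < x := fun x => by
    rw [← not_le, ← not_le, (hp.apply_ne x).symm.le_iff_lt, (hq.apply_ne x).symm.le_iff_lt, hop]
  have hagree : ∀ c, p c < c → p c = q c := by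
    intro c
    induction c using WellFoundedLT.induction with
    | ind c ih =>
      intro hc
      refine le_antisymm (not_lt.1 ?_) (not_lt.1 ?_)
      · exact hq.not_lt_of_agree_below hp.toIsPairing (fun x => (hop x).symm) hc
          fun x hx hqx => (ih x hx ((hcl x).2 hqx)).symm
      · exact hp.not_lt_of_agree_below hq.toIsPairing hop ((hcl c).1 hc) ih
  ext1 x
  rcases (hp.apply_ne x).lt_or_gt with hx | hx
  · exact hagree x hx
  · have h := hagree (p x) (by rwa [hp.involutive])
    rw [hp.involutive] at h
    rw [h, hq.involutive, ← h]

theorem alternates_even {n : ℕ} {p : Perm (Fin n)} (hp : IsNonCrossing p) :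
    Alternates EvenVal p := by
  have hopen : ∀ x, x < p x → (Even (p x : ℕ) ↔ ¬ Even (x : ℕ)) := by
    intro x hx
    have hcard := hp.toIsPairing.even_card (s := Finset.Ioo x (p x)) fun y hy => by
      simpa using hp.apply_mem_Ioo (by simpa using hy)
    rw [Fin.card_Ioo] at hcard
    rw [Fin.lt_def] at hx
    grind
  intro x
  rcases (hp.apply_ne x).lt_or_gt with hx | hx
  · have h := hopen (p x) (by rwa [hp.involutive])
    rw [hp.involutive] at h
    tauto
  · exact hopen x hx

end IsNonCrossing

end Pairings

section TotalSpan

open Equiv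

variable {α : Type*} {P : α → Prop} [DecidablePred P]

/-- The sign `1` where `P` holds and `-1` where it fails. -/
def signOf (P : α → Prop) [DecidablePred P] (x : α) : ℤ :=
  if P x then 1 else -1

theorem Alternates.signOf_apply {p : Perm α} (h : Alternates P p) (x : α) :
    signOf P (p x) = -signOf P x := by
  by_cases hx : P x <;> simp [signOf, h x, hx]

theorem Alternates.sum_signOf_mul_sub [Fintype α] {p : Perm α} (h : Alternates P p) (w : α → ℤ) :
    ∑ x, signOf P x * (w (p x) - w x) = -2 * ∑ x, signOf P x * w x := by
  have hpartner : ∑ x, signOf P x * w (p x) = -∑ x, signOf P x * w x := by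
    rw [← Equiv.sum_comp p fun x => signOf P x * w x]
    simp [h.signOf_apply]
  simp only [mul_sub, Finset.sum_sub_distrib, hpartner]
  ring

variable {n : ℕ} {p q : Perm (Fin n)}

/-- Twice the sum of the lengths `|p x - x|` of the pairs of `p`. -/
def totalSpan (p : Perm (Fin n)) : ℤ :=
  ∑ x, |(p x : ℤ) - x|

theorem totalSpan_eq_sum_signOf (p : Perm (Fin n)) :
    totalSpan p = ∑ x, signOf (IsOpener p) x * ((p x : ℤ) - x) := by
  refine Finset.sum_congr rfl fun x _ => ?_
  simp only [signOf, Fin.lt_def]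
  grind

/-- The signed sum `∑ x, ± (q x - x)`, with the signs given by the openers of `p`, is the same for
all `q` alternating these openers, and it is at most `totalSpan q`. -/
theorem IsPairing.isOpener_iff_of_totalSpan_le (hp : IsPairing p) (hq : IsPairing q)
    (h : Alternates (IsOpener p) q) (hle : totalSpan q ≤ totalSpan p) (x : Fin n) :
    x < p x ↔ x < q x := by
  have hbound : ∀ y ∈ Finset.univ,
      signOf (IsOpener p) y * ((q y : ℤ) - y) ≤ |(q y : ℤ) - y| := by
    intro y _
    rw [signOf]
    grind
  have hspan : totalSpan p = ∑ y, signOf (IsOpener p) y * ((q y : ℤ) - y) := by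
    rw [totalSpan_eq_sum_signOf, hp.alternates_isOpener.sum_signOf_mul_sub (fun y => (y : ℤ)),
      h.sum_signOf_mul_sub (fun y => (y : ℤ))]
  have htight := (Finset.sum_eq_sum_iff_of_le hbound).1
    (le_antisymm (Finset.sum_le_sum hbound) (hspan ▸ hle)) x (Finset.mem_univ x)
  have hne : (q x : ℕ) ≠ x := Fin.val_ne_of_ne (hq.apply_ne x)
  rw [signOf] at htight
  rw [Fin.lt_def (b := q x)]
  grind

end TotalSpan

section PairingVector

open Equiv Matrix

variable {α : Type*} {κ : Type*}

/-- The vector `∑ e_{i₁} ⊗ ⋯ ⊗ e_{iₘ}` over the colourings `i` that are constant on the pairs of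
`p`, given by its coordinates. -/
def pairingVector (κ : Type*) [DecidableEq κ] [Fintype α] (p : Perm α) : (α → κ) → ℝ :=
  fun i => if i ∘ p = i then 1 else 0

theorem pairingVector_dotProduct [Fintype α] [DecidableEq α] [Fintype κ] [DecidableEq κ]
    (p q : Perm α) :
    pairingVector κ p ⬝ᵥ pairingVector κ q =
      Nat.card {i : α → κ // i ∘ p = i ∧ i ∘ q = i} := by
  simp only [dotProduct, pairingVector, ← ite_and, mul_ite, mul_one, mul_zero]
  rw [Finset.sum_boole, Nat.card_eq_fintype_card, Fintype.card_subtype]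
  simp only [and_comm]

theorem orbitRel_closure_le_ker_iff {S : Set (Perm α)} {i : α → κ} :
    MulAction.orbitRel (Subgroup.closure S) α ≤ Setoid.ker i ↔ ∀ g ∈ S, i ∘ g = i := by
  constructor
  · exact fun h g hg => funext fun x => h ⟨⟨g, Subgroup.subset_closure hg⟩, rfl⟩
  · rintro h _ y ⟨⟨g, hg⟩, rfl⟩
    suffices i ∘ g = i from congrFun this y
    induction hg using Subgroup.closure_induction with
    | mem g hg => exact h g hg
    | one => rfl
    | mul g₁ g₂ _ _ h₁ h₂ => rw [Perm.coe_mul, ← Function.comp_assoc, h₁, h₂]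
    | inv g _ hg => rw [← hg, Function.comp_assoc, ← Perm.coe_mul, mul_inv_cancel, hg]; rfl

theorem card_pow_card_orbits [Finite α] [Finite κ] (S : Set (Perm α)) :
    Nat.card κ ^ Nat.card (MulAction.orbitRel.Quotient (Subgroup.closure S) α) =
      Nat.card {i : α → κ // ∀ g ∈ S, i ∘ g = i} := by
  rw [← Nat.card_fun]
  exact Nat.card_congr ((Setoid.liftEquiv _).symm.trans
    (Equiv.subtypeEquivRight fun _ => orbitRel_closure_le_ker_iff))

/-- The matrix whose rows are the vectors of the non-crossing pair partitions. -/
def pairingMatrix (k : ℕ) (κ : Type*) [DecidableEq κ] : Matrix (NCPair k) (Fin (2 * k) → κ) ℝ :=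
  Matrix.of fun p => pairingVector κ p.1

theorem gram_eq_mul_transpose (k : ℕ) (κ : Type*) [Fintype κ] [DecidableEq κ] :
    Gram k (Fintype.card κ) = pairingMatrix k κ * (pairingMatrix k κ)ᵀ := by
  ext p q
  have hloops := card_pow_card_orbits (κ := κ) {p.1, q.1}
  simp only [Set.forall_mem_insert, Set.mem_singleton_iff, forall_eq] at hloops
  refine Eq.trans ?_ (pairingVector_dotProduct p.1 q.1).symm
  rw [← hloops, Gram, loops, Nat.card_eq_fintype_card (α := κ)]
  push_cast
  rfl

end PairingVector

section LinearIndependence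

open Equiv Matrix

variable {n : ℕ} {p q : Perm (Fin n)}

/-- A colouring which is constant on the pairs of `p`, and on those of another non-crossing `q`
only if `q` alternates the openers of `p`. -/
def testColouring (p : Perm (Fin n)) : Fin n → Bool :=
  fun x => decide (x < p x ↔ Even (x : ℕ))

theorem IsNonCrossing.testColouring_comp_eq_iff (hq : IsNonCrossing q) (p : Perm (Fin n)) :
    testColouring p ∘ q = testColouring p ↔ Alternates (IsOpener p) q := by
  rw [funext_iff]
  refine forall_congr' fun x => ?_
  have hparity := hq.alternates_even x
  simp only [testColouring, Function.comp_apply, decide_eq_decide]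
  tauto

theorem linearIndependent_pairingVector {ι : Type*} {p : ι → Perm (Fin n)}
    (hp : ∀ a, IsNonCrossing (p a)) (hinj : Function.Injective p) :
    LinearIndependent ℝ fun a => pairingVector Bool (p a) := by
  rw [linearIndependent_iff']
  intro s g hg
  by_contra! hne
  obtain ⟨a, ha, hmax⟩ := (s.filter (g · ≠ 0)).exists_max_image (fun a => totalSpan (p a))
    (Finset.filter_nonempty_iff.2 hne)
  simp only [Finset.mem_filter] at ha hmax
  have hzero : ∀ b ∈ s, b ≠ a →
      (g b • pairingVector Bool (p b)) (testColouring (p a)) = 0 := by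
    intro b hb hba
    by_cases hgb : g b = 0
    · simp [hgb]
    have hnalt : ¬ Alternates (IsOpener (p a)) (p b) := fun halt =>
      hba <| hinj <| Eq.symm <| (hp a).eq_of_isOpener_iff (hp b) <|
        (hp a).isOpener_iff_of_totalSpan_le (hp b).toIsPairing halt (hmax b ⟨hb, hgb⟩)
    simp [pairingVector, (hp b).testColouring_comp_eq_iff, hnalt]
  have heval := congrFun hg (testColouring (p a))
  rw [Finset.sum_apply, Finset.sum_eq_single_of_mem a ha.1 hzero] at heval
  simp [pairingVector, (hp a).testColouring_comp_eq_iff, (hp a).alternates_isOpener, ha.2] at heval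

theorem isNonCrossing_val {k : ℕ} (p : NCPair k) : IsNonCrossing p.1 where
  involutive := p.2.1
  apply_ne := p.2.2.1
  apply_ne_of_lt := p.2.2.2

theorem range_val_ncPair (k : ℕ) :
    Set.range (fun p : NCPair k => p.1) = {p | IsNonCrossing p} := by
  ext p
  constructor
  · rintro ⟨p, rfl⟩
    exact isNonCrossing_val p
  · exact fun hp => ⟨⟨p, hp.involutive, hp.apply_ne, hp.apply_ne_of_lt⟩, rfl⟩

theorem isUnit_gram_two (k : ℕ) : IsUnit (Gram k 2) := by
  have hrows : LinearIndependent ℝ (pairingMatrix k Bool).row :=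
    linearIndependent_pairingVector isNonCrossing_val Subtype.val_injective
  rw [← Fintype.card_bool, gram_eq_mul_transpose, ← conjTranspose_eq_transpose_of_trivial]
  exact (PosDef.mul_conjTranspose_self _ (vecMul_injective_iff.2 hrows)).isUnit

end LinearIndependence

section PairProd

open Equiv

variable {α : Type*} [Fintype α] [LinearOrder α]

/-- The product (`pairSum`: the sum) of `f x y` over the pairs `x < y` exchanged by the involution
`p`. Fixed points are allowed, so that single pairs can be split off. -/
@[to_additive]
def pairProd {M : Type*} [CommMonoid M] (f : α → α → M) (p : Perm α) : M :=
  ∏ x with x < p x, f x (p x)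

@[to_additive pairSum_swap_mul]
theorem pairProd_swap_mul {M : Type*} [CommMonoid M] (f : α → α → M) {r : Perm α} {a b : α}
    (hab : a < b) (ha : r a = a) (hb : r b = b) :
    pairProd f (swap a b * r) = f a b * pairProd f r := by
  have hoff : ∀ x, x ≠ a → x ≠ b → (swap a b * r) x = r x := fun x hxa hxb =>
    swap_apply_of_ne_of_ne (fun h => hxa (r.injective (h.trans ha.symm)))
      fun h => hxb (r.injective (h.trans hb.symm))
  have hopeners : Finset.univ.filter (fun x => x < (swap a b * r) x) =
      insert a (Finset.univ.filter fun x => x < r x) := by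
    ext x
    simp only [Finset.mem_filter_univ, Finset.mem_insert]
    rcases eq_or_ne x a with rfl | hxa
    · simp [ha, hab]
    rcases eq_or_ne x b with rfl | hxb
    · simp [hb, hab.le, hxa]
    · rw [hoff x hxa hxb, or_iff_right hxa]
  rw [pairProd, hopeners, Finset.prod_insert (by simp [ha]), pairProd]
  congr 1
  · simp [ha]
  · refine Finset.prod_congr rfl fun x hx => ?_
    have hx : x < r x := by simpa using hx
    rw [hoff x (fun h => hx.ne (by rw [h, ha])) fun h => hx.ne (by rw [h, hb])]

@[to_additive pairSum_swap_mul_swap_mul]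
theorem pairProd_swap_mul_swap_mul {M : Type*} [CommMonoid M] (f : α → α → M) {r : Perm α}
    {a b c d : α} (hab : a < b) (hcd : c < d) (hac : a ≠ c) (had : a ≠ d) (hbc : b ≠ c)
    (hbd : b ≠ d) (ha : r a = a) (hb : r b = b) (hc : r c = c) (hd : r d = d) :
    pairProd f (swap a b * (swap c d * r)) = f a b * (f c d * pairProd f r) := by
  have hinner_left : (swap c d * r) a = a := by
    rw [Perm.mul_apply, ha, swap_apply_of_ne_of_ne hac had]
  have hinner_right : (swap c d * r) b = b := by
    rw [Perm.mul_apply, hb, swap_apply_of_ne_of_ne hbc hbd]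
  rw [pairProd_swap_mul f hab hinner_left hinner_right, pairProd_swap_mul f hcd hc hd]

end PairProd

section Uncrossing

open Equiv

variable {α : Type*}

theorem involutive_swap_mul [DecidableEq α] {p : Perm α} (hp : Function.Involutive p) {a b : α}
    (h : swap (p a) (p b) = swap a b) : Function.Involutive (swap a b * p) := by
  intro x
  have hcomm : p (swap a b (p x)) = swap a b (p (p x)) := by
    simpa [h] using Equiv.congr_fun (mul_swap_eq_swap_mul p a b) (p x)
  simp only [Perm.mul_apply, hcomm, hp x, swap_apply_self]

theorem isPairing_swap_mul_swap_mul [DecidableEq α] {r : Perm α} (hr : Function.Involutive r)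
    {a b c d : α} (hab : a ≠ b) (hcd : c ≠ d)
    (hac : a ≠ c) (had : a ≠ d) (hbc : b ≠ c) (hbd : b ≠ d)
    (hfix : ∀ x, r x = x ↔ x = a ∨ x = b ∨ x = c ∨ x = d) :
    IsPairing (swap a b * (swap c d * r)) := by
  have ha : r a = a := by simp [hfix]
  have hb : r b = b := by simp [hfix]
  have hc : r c = c := by simp [hfix]
  have hd : r d = d := by simp [hfix]
  have hinner : Function.Involutive (swap c d * r) := involutive_swap_mul hr (by rw [hc, hd])
  refine ⟨involutive_swap_mul hinner ?_, fun x => ?_⟩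
  · simp [swap_apply_of_ne_of_ne, *]
  · simp only [Perm.mul_apply, swap_apply_def]
    grind

variable [LinearOrder α]

theorem IsPairing.exists_eq_swap_mul_swap_mul {p : Perm α} (hp : IsPairing p) {a b : α}
    (hba : b ≠ a) (hbpa : b ≠ p a) :
    ∃ r : Perm α, Function.Involutive r ∧
      (∀ x, r x = x ↔ x = a ∨ x = b ∨ x = p a ∨ x = p b) ∧
      p = swap a (p a) * (swap b (p b) * r) := by
  have hinv := hp.involutive
  have hne := hp.apply_ne
  refine ⟨swap b (p b) * (swap a (p a) * p), ?_, fun x => ?_, by simp [← mul_assoc]⟩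
  · refine involutive_swap_mul (involutive_swap_mul hinv ?_) ?_
    · rw [hinv a, swap_comm]
    · have hb : (swap a (p a) * p) b = p b :=
        swap_apply_of_ne_of_ne (fun h => hbpa (by rw [← h, hinv])) (p.injective.ne hba)
      have hpb : (swap a (p a) * p) (p b) = b := by
        rw [Perm.mul_apply, hinv, swap_apply_of_ne_of_ne hba hbpa]
      rw [hb, hpb, swap_comm]
  · simp only [Perm.mul_apply, swap_apply_def]
    grind [Function.Involutive]

/-- The length of the arc from `x` to `y` on the circle `ℤ / n`, times that of the complementary
arc. The sum over the pairs decreases under both ways of resolving a crossing. -/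
def arcWeight {n : ℕ} (x y : Fin n) : ℕ :=
  (y - x : ℕ) * (n - (y - x))

theorem cast_arcWeight {n : ℕ} {x y : Fin n} (hxy : x < y) :
    (arcWeight x y : ℤ) = (y - x) * (n - (y - x)) := by
  have hle : (x : ℕ) ≤ y := hxy.le
  have hlen : (y - x : ℕ) ≤ n := by omega
  rw [arcWeight, Nat.cast_mul, Nat.cast_sub hlen, Nat.cast_sub hle]

theorem arcWeight_adjacent_add_lt {n : ℕ} {a b c d : Fin n}
    (hab : a < b) (hbc : b < c) (hcd : c < d) :
    arcWeight a b + arcWeight c d < arcWeight a c + arcWeight b d := by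
  zify
  rw [cast_arcWeight hab, cast_arcWeight hcd, cast_arcWeight (hab.trans hbc),
    cast_arcWeight (hbc.trans hcd)]
  have hmid : (0 : ℤ) < c - b := by omega
  have hout : (0 : ℤ) < n - (d - a) := by omega
  linarith [mul_pos hmid hout]

theorem arcWeight_nested_add_lt {n : ℕ} {a b c d : Fin n}
    (hab : a < b) (hbc : b < c) (hcd : c < d) :
    arcWeight a d + arcWeight b c < arcWeight a c + arcWeight b d := by
  zify
  rw [cast_arcWeight hbc, cast_arcWeight (hab.trans hbc), cast_arcWeight (hbc.trans hcd),
    cast_arcWeight (hab.trans (hbc.trans hcd))]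
  have hleft : (0 : ℤ) < b - a := by omega
  have hright : (0 : ℤ) < d - c := by omega
  linarith [mul_pos hleft hright]

theorem IsPairing.exists_pairProd_eq_add {n : ℕ} {A : Type*} [CommSemiring A]
    {f : Fin n → Fin n → A}
    (hf : ∀ a b c d, a < b → b < c → c < d → f a c * f b d = f a b * f c d + f a d * f b c)
    {p : Perm (Fin n)} (hp : IsPairing p) (hnc : ¬ IsNonCrossing p) :
    ∃ q₁ q₂, IsPairing q₁ ∧ IsPairing q₂ ∧ pairSum arcWeight q₁ < pairSum arcWeight p ∧
      pairSum arcWeight q₂ < pairSum arcWeight p ∧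
      pairProd f p = pairProd f q₁ + pairProd f q₂ := by
  obtain ⟨a, b, c, d, hab, hbc, hcd, hpa, hpb⟩ :
      ∃ a b c d, a < b ∧ b < c ∧ c < d ∧ p a = c ∧ p b = d := by
    by_contra! h
    exact hnc ⟨hp, h⟩
  obtain ⟨r, hr, hfix, hpr⟩ := hp.exists_eq_swap_mul_swap_mul hab.ne' (hpa ▸ hbc.ne)
  rw [hpa, hpb] at hfix hpr
  have hac := hab.trans hbc
  have hbd := hbc.trans hcd
  have had := hab.trans hbd
  have ha : r a = a := by simp [hfix]
  have hb : r b = b := by simp [hfix]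
  have hc : r c = c := by simp [hfix]
  have hd : r d = d := by simp [hfix]
  refine ⟨swap a b * (swap c d * r), swap a d * (swap b c * r), ?_, ?_, ?_, ?_, ?_⟩
  · exact isPairing_swap_mul_swap_mul hr hab.ne hcd.ne hac.ne had.ne hbc.ne hbd.ne hfix
  · exact isPairing_swap_mul_swap_mul hr had.ne hbc.ne hab.ne hac.ne hbd.ne' hcd.ne'
      fun x => by rw [hfix x]; tauto
  · rw [hpr, pairSum_swap_mul_swap_mul _ hab hcd hac.ne had.ne hbc.ne hbd.ne ha hb hc hd,
      pairSum_swap_mul_swap_mul _ hac hbd hab.ne had.ne hbc.ne' hcd.ne ha hc hb hd]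
    linarith [arcWeight_adjacent_add_lt hab hbc hcd]
  · rw [hpr, pairSum_swap_mul_swap_mul _ had hbc hab.ne hac.ne hbd.ne' hcd.ne' ha hd hb hc,
      pairSum_swap_mul_swap_mul _ hac hbd hab.ne had.ne hbc.ne' hcd.ne ha hc hb hd]
    linarith [arcWeight_nested_add_lt hab hbc hcd]
  · rw [hpr, pairProd_swap_mul_swap_mul _ hac hbd hab.ne had.ne hbc.ne' hcd.ne ha hc hb hd,
      pairProd_swap_mul_swap_mul _ hab hcd hac.ne had.ne hbc.ne hbd.ne ha hb hc hd,
      pairProd_swap_mul_swap_mul _ had hbc hab.ne hac.ne hbd.ne' hcd.ne' ha hd hb hc,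
      ← mul_assoc, hf a b c d hab hbc hcd, add_mul, mul_assoc, mul_assoc]

theorem IsPairing.pairProd_mem_closure {n : ℕ} {A : Type*} [CommSemiring A]
    {f : Fin n → Fin n → A}
    (hf : ∀ a b c d, a < b → b < c → c < d → f a c * f b d = f a b * f c d + f a d * f b c)
    {p : Perm (Fin n)} (hp : IsPairing p) :
    pairProd f p ∈ AddSubmonoid.closure (pairProd f '' {q | IsNonCrossing q}) := by
  induction hw : pairSum arcWeight p using Nat.strong_induction_on generalizing p with
  | _ w ih =>
    by_cases hnc : IsNonCrossing p
    · exact AddSubmonoid.subset_closure ⟨p, hnc, rfl⟩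
    obtain ⟨q₁, q₂, hq₁, hq₂, hlt₁, hlt₂, hadd⟩ := hp.exists_pairProd_eq_add hf hnc
    rw [hadd]
    exact add_mem (ih _ (hw ▸ hlt₁) hq₁ rfl) (ih _ (hw ▸ hlt₂) hq₂ rfl)

end Uncrossing

section Spinor

open Equiv

variable {α : Type*} (P : α → Prop) [DecidablePred P]

/-- The basis vector of `ℝ²` of the colour of `x`, or its rotation by a quarter turn where `P`
fails. The determinant of a basis vector and a rotated one is then the Kronecker symbol of their
colours. -/
def spinor (i : α → Bool) (x : α) : ℝ × ℝ :=
  if P x then (if i x then (0, 1) else (1, 0)) else (if i x then (-1, 0) else (0, 1))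

/-- The determinant of the spinors at `x` and `y`, as a function of the colouring. -/
def spinorBracket (x y : α) : (α → Bool) → ℝ :=
  fun i => (spinor P i x).1 * (spinor P i y).2 - (spinor P i x).2 * (spinor P i y).1

theorem spinorBracket_pluecker (a b c d : α) :
    spinorBracket P a c * spinorBracket P b d =
      spinorBracket P a b * spinorBracket P c d + spinorBracket P a d * spinorBracket P b c := by
  ext i
  simp only [spinorBracket, Pi.mul_apply, Pi.add_apply]
  ring

variable {P}

theorem spinorBracket_apply_of_iff_not {x y : α} (h : P y ↔ ¬ P x) (i : α → Bool) :
    spinorBracket P x y i = signOf P x * if i y = i x then 1 else 0 := by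
  by_cases hx : P x <;> cases hix : i x <;> cases hiy : i y <;>
    simp [spinorBracket, spinor, signOf, h, hx, hix, hiy]

variable [Fintype α] [LinearOrder α] {p : Perm α}

theorem IsPairing.pairingVector_eq_prod {κ : Type*} [DecidableEq κ] (hp : IsPairing p)
    (i : α → κ) :
    pairingVector κ p i = ∏ x with x < p x, if i (p x) = i x then 1 else 0 := by
  have hiff : i ∘ p = i ↔ ∀ x ∈ Finset.univ.filter (fun x => x < p x), i (p x) = i x := by
    simp only [Finset.mem_filter_univ, funext_iff, Function.comp_apply]
    refine ⟨fun h x _ => h x, fun h x => ?_⟩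
    rcases (hp.apply_ne x).lt_or_gt with hx | hx
    · have hpx := h (p x) (by rwa [hp.involutive])
      rw [← hpx, hp.involutive]
    · exact h x hx
  by_cases h : i ∘ p = i
  · rw [pairingVector, Finset.prod_boole, if_pos h, if_pos (hiff.1 h)]
  · rw [pairingVector, Finset.prod_boole, if_neg h, if_neg (mt hiff.2 h)]

theorem IsPairing.pairProd_spinorBracket (hp : IsPairing p) (h : Alternates P p) :
    pairProd (spinorBracket P) p =
      ((∏ x with x < p x, signOf P x : ℤ) : ℝ) • pairingVector Bool p := by
  ext i
  simp only [pairProd, Finset.prod_apply, spinorBracket_apply_of_iff_not (h _),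
    Finset.prod_mul_distrib, Pi.smul_apply, hp.pairingVector_eq_prod, smul_eq_mul, Int.cast_prod]

theorem pairingVector_mem_span {n : ℕ} {r : Perm (Fin n)} (hr : Function.Involutive r)
    (h : Alternates EvenVal r) :
    pairingVector Bool r ∈ Submodule.span ℝ (pairingVector Bool '' {q | IsNonCrossing q}) := by
  have hpair := h.isPairing hr
  have hsign : ((∏ x with x < r x, signOf EvenVal x : ℤ) : ℝ) ≠ 0 := by
    rw [Int.cast_ne_zero, Finset.prod_ne_zero_iff]
    intro x _
    rw [signOf]
    split_ifs <;> decide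
  rw [← Submodule.smul_mem_iff _ hsign, ← hpair.pairProd_spinorBracket h]
  have hclosure := hpair.pairProd_mem_closure
    fun a b c d _ _ _ => spinorBracket_pluecker EvenVal a b c d
  refine Submodule.span_le.2 ?_ (Submodule.closure_subset_span (R := ℝ) hclosure)
  rintro _ ⟨q, hq : IsNonCrossing q, rfl⟩
  rw [hq.toIsPairing.pairProd_spinorBracket hq.alternates_even]
  exact Submodule.smul_mem _ _ (Submodule.subset_span ⟨q, hq, rfl⟩)

end Spinor

section AlternatingPairings

open Equiv Matrix

open scoped Nat

variable {α κ : Type*} {P : α → Prop}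

/-- A pair partition of `α` in which each pair has exactly one element satisfying `P`. -/
@[ext]
structure AlternatingPairing (P : α → Prop) where
  perm : Perm α
  involutive : Function.Involutive perm
  alternates : Alternates P perm

namespace AlternatingPairing

noncomputable instance [Finite α] : Fintype (AlternatingPairing P) :=
  @Fintype.ofFinite _ (Finite.of_injective perm fun _ _ => AlternatingPairing.ext)

/-- The permutation `t * r` of the elements satisfying `P`. -/
def relPerm (t r : AlternatingPairing P) : Perm {x // P x} :=
  (t.perm * r.perm).subtypePerm fun x => by
    rw [Perm.mul_apply, t.alternates, r.alternates, not_not]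

theorem coe_relPerm_apply (t r : AlternatingPairing P) (x : {x // P x}) :
    (t.relPerm r x : α) = t.perm (r.perm x) :=
  rfl

theorem relPerm_injective (t : AlternatingPairing P) : Function.Injective t.relPerm := by
  intro r r' h
  have heq : ∀ x, P x → r.perm x = r'.perm x := fun x hx =>
    t.perm.injective (congrArg Subtype.val (Equiv.congr_fun h ⟨x, hx⟩))
  refine AlternatingPairing.ext (Equiv.ext fun x => ?_)
  by_cases hx : P x
  · exact heq x hx
  · have h' := heq (r.perm x) ((r.alternates x).2 hx)
    rw [r.involutive, ← r'.involutive x] at h'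
    rw [r'.perm.injective h', r'.involutive]

/-- The preimage of `s` is the conjugate of `t` by `s`. -/
theorem relPerm_surjective (t : AlternatingPairing P) : Function.Surjective t.relPerm := by
  classical
  intro s
  have hs := Perm.ofSubtype_apply_mem_iff_mem s
  have hs_symm : ∀ x, P ((Perm.ofSubtype s).symm x) ↔ P x := fun x => by
    rw [← hs, apply_symm_apply]
  refine ⟨⟨(Perm.ofSubtype s).trans (t.perm.trans (Perm.ofSubtype s).symm), fun x => ?_,
    fun x => ?_⟩, Equiv.ext fun x => Subtype.ext ?_⟩
  · simp only [trans_apply, apply_symm_apply, t.involutive _, symm_apply_apply]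
  · simp only [trans_apply, hs_symm, t.alternates _, hs]
  · have hfix : (Perm.ofSubtype s).symm (t.perm (s x)) = t.perm (s x) := by
      rw [symm_apply_eq, Perm.ofSubtype_apply_of_not_mem]
      exact fun h => (t.alternates _).1 h (s x).2
    simp only [coe_relPerm_apply, trans_apply, Perm.ofSubtype_apply_coe, hfix, t.involutive _]

theorem relPerm_bijective (t : AlternatingPairing P) : Function.Bijective t.relPerm :=
  ⟨t.relPerm_injective, t.relPerm_surjective⟩

theorem card_eq_factorial [Finite α] (t : AlternatingPairing P) :
    Nat.card (AlternatingPairing P) = (Nat.card {x // P x})! := by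
  rw [Nat.card_eq_of_bijective _ t.relPerm_bijective, Nat.card_perm]

theorem card_eq_two_mul [Finite α] (t : AlternatingPairing P) :
    Nat.card α = 2 * Nat.card {x // P x} := by
  classical
  have hcompl : Nat.card {x // P x} = Nat.card {x // ¬ P x} :=
    Nat.card_congr (t.perm.subtypeEquiv fun x => by rw [t.alternates, not_not])
  rw [← Nat.card_congr (Equiv.sumCompl P), Nat.card_sum, ← hcompl, two_mul]

/-- The colourings constant on the pairs of `t` are the extensions, unique, of the colourings of
the elements satisfying `P`. -/
def restrictEquiv [DecidablePred P] (t : AlternatingPairing P) :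
    {i : α → κ // i ∘ t.perm = i} ≃ ({x // P x} → κ) where
  toFun i x := i.1 x
  invFun h := by
    refine ⟨fun x => if hx : P x then h ⟨x, hx⟩ else h ⟨t.perm x, (t.alternates x).2 hx⟩,
      funext fun x => ?_⟩
    by_cases hx : P x <;> simp [t.alternates x, t.involutive x, hx]
  left_inv i := by
    ext x
    by_cases hx : P x
    · simp [hx]
    · simpa [hx] using congrFun i.2 x
  right_inv h := by
    ext x
    simp [x.2]

theorem comp_eq_iff_comp_relPerm_eq [DecidablePred P] (t r : AlternatingPairing P)
    (i : {i : α → κ // i ∘ t.perm = i}) :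
    i.1 ∘ r.perm = i.1 ↔ t.restrictEquiv i ∘ t.relPerm r = t.restrictEquiv i := by
  have hi : ∀ x, i.1 (t.perm x) = i.1 x := congrFun i.2
  constructor
  · exact fun h => funext fun x => (hi _).trans (congrFun h x)
  · intro h
    have hP : ∀ x, P x → i.1 (r.perm x) = i.1 x := fun x hx =>
      (hi _).symm.trans (congrFun h ⟨x, hx⟩)
    ext x
    by_cases hx : P x
    · exact hP x hx
    · have hrx := hP (r.perm x) ((r.alternates x).2 hx)
      rw [r.involutive] at hrx
      exact hrx.symm

theorem card_comp_eq_and_comp_eq (κ : Type*) (t r : AlternatingPairing P) :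
    Nat.card {i : α → κ // i ∘ t.perm = i ∧ i ∘ r.perm = i} =
      Nat.card {h : {x // P x} → κ // h ∘ t.relPerm r = h} := by
  classical
  exact Nat.card_congr ((subtypeSubtypeEquivSubtypeInter _ _).symm.trans
    (t.restrictEquiv.subtypeEquiv (t.comp_eq_iff_comp_relPerm_eq r)))

end AlternatingPairing

theorem card_perm_comp_eq {β : Type*} [Fintype β] (h : β → Bool) :
    Nat.card {s : Perm β // h ∘ s = h} =
      (Finset.univ.filter (h ·)).card ! * (Nat.card β - (Finset.univ.filter (h ·)).card)! := by
  classical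
  have hcompl := Finset.card_filter_add_card_filter_not (s := Finset.univ) (h ·)
  rw [Finset.card_univ] at hcompl
  rw [Nat.card_eq_fintype_card, DomMulAct.stabilizer_card, Fintype.prod_bool,
    Nat.card_eq_fintype_card, ← hcompl, Nat.add_sub_cancel_left]
  simp only [Fintype.card_subtype, Bool.not_eq_true]

theorem sum_card_comp_perm_eq (β : Type*) [Fintype β] [DecidableEq β] :
    ∑ s : Perm β, Nat.card {h : β → Bool // h ∘ s = h} = (Nat.card β + 1)! := by
  have hswap : ∑ s : Perm β, Nat.card {h : β → Bool // h ∘ s = h} =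
      ∑ h : β → Bool, Nat.card {s : Perm β // h ∘ s = h} := by
    simp only [Nat.card_eq_fintype_card, Fintype.card_subtype]
    exact Finset.sum_card_bipartiteAbove_eq_sum_card_bipartiteBelow _
  let support : (β → Bool) ≃ Finset β :=
    ⟨fun h => Finset.univ.filter (h ·), fun S x => decide (x ∈ S), fun h => by ext; simp,
      fun S => by ext; simp⟩
  rw [hswap]
  calc ∑ h : β → Bool, Nat.card {s : Perm β // h ∘ s = h}
      = ∑ S : Finset β, S.card ! * (Nat.card β - S.card)! :=
        Fintype.sum_equiv support _ _ card_perm_comp_eq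
    _ = ∑ m ∈ Finset.range (Nat.card β + 1), (Nat.card β).choose m * (m ! * (Nat.card β - m)!) := by
        rw [← Finset.powerset_univ,
          Finset.sum_powerset_apply_card fun m => m ! * (Nat.card β - m)!]
        simp
    _ = ∑ _ ∈ Finset.range (Nat.card β + 1), (Nat.card β)! := by
        refine Finset.sum_congr rfl fun _ hm => ?_
        rw [← mul_assoc, Nat.choose_mul_factorial_mul_factorial
          (Nat.lt_succ_iff.1 (Finset.mem_range.1 hm))]
    _ = (Nat.card β + 1)! := by
        rw [Finset.sum_const, Finset.card_range, smul_eq_mul, Nat.factorial_succ]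

theorem pairingVector_dotProduct_sum [Fintype α] [DecidableEq α] (t : AlternatingPairing P) :
    pairingVector Bool t.perm ⬝ᵥ ∑ r : AlternatingPairing P, pairingVector Bool r.perm =
      (Nat.card {x // P x} + 1)! := by
  classical
  simp only [dotProduct_sum, pairingVector_dotProduct, t.card_comp_eq_and_comp_eq]
  rw [← sum_card_comp_perm_eq, Nat.cast_sum]
  exact t.relPerm_bijective.sum_comp fun s =>
    (Nat.card {h : {x // P x} → Bool // h ∘ s = h} : ℝ)

theorem sum_pairingVector_const [Fintype α] [DecidableEq κ] (b : κ) (t : AlternatingPairing P) :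
    (∑ r : AlternatingPairing P, pairingVector κ r.perm) (fun _ => b) = (Nat.card {x // P x})! := by
  rw [← t.card_eq_factorial, Nat.card_eq_fintype_card, Finset.sum_apply]
  simp [pairingVector, Function.comp_def]

end AlternatingPairings

section Weingarten

open Matrix

theorem mul_sum_sum_inv_eq_sum {ι R : Type*} [Fintype ι] [DecidableEq ι] [CommRing R]
    {G : Matrix ι ι R} (hG : IsUnit G) {c : ι → R} {a : R} (hc : G *ᵥ c = fun _ => a) :
    a * ∑ p, ∑ q, G⁻¹ p q = ∑ p, c p := by
  have hsol : c = G⁻¹ *ᵥ fun _ => a := by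
    rw [← hc, mulVec_mulVec, nonsing_inv_mul _ ((isUnit_iff_isUnit_det _).1 hG), one_mulVec]
  rw [hsol, Finset.mul_sum]
  refine Finset.sum_congr rfl fun p _ => ?_
  rw [mulVec, dotProduct, ← Finset.sum_mul, mul_comm]

theorem exists_vecMul_pairingMatrix_eq (k : ℕ) :
    ∃ c, c ᵥ* pairingMatrix k Bool =
      ∑ r : AlternatingPairing (@EvenVal (2 * k)), pairingVector Bool r.perm := by
  have hspan : ∑ r : AlternatingPairing (@EvenVal (2 * k)), pairingVector Bool r.perm ∈
      Submodule.span ℝ (Set.range (pairingMatrix k Bool).row) := by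
    have hrange : Set.range (pairingMatrix k Bool).row =
        pairingVector Bool '' {q | IsNonCrossing q} := by
      rw [← range_val_ncPair, ← Set.range_comp]
      rfl
    rw [hrange]
    exact Submodule.sum_mem _ fun r _ => pairingVector_mem_span r.involutive r.alternates
  rwa [← range_vecMulLinear] at hspan

/-- The reflection `x ↦ 2k - 1 - x`. -/
def revPairing (k : ℕ) : AlternatingPairing (@EvenVal (2 * k)) :=
  ⟨Fin.revPerm, Fin.rev_involutive, fun x => by
    have := x.2
    simp only [Fin.revPerm_apply]
    grind⟩

theorem card_evenVal (k : ℕ) : Nat.card {x : Fin (2 * k) // EvenVal x} = k := by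
  simpa using (revPairing k).card_eq_two_mul.symm

end Weingarten

/-- For k ≥ 1, the sum of all entries of the Weingarten matrix W_{k2} = G_{k2}⁻¹
equals 1/(k+1): these are the even moments of a generator of A_o(2). -/
theorem sum_weingarten_two (k : ℕ) (hk : 1 ≤ k) :
    ∑ p : NCPair k, ∑ q : NCPair k, (Gram k 2)⁻¹ p q = 1 / ((k : ℝ) + 1) := by
  obtain ⟨c, hc⟩ := exists_vecMul_pairingMatrix_eq k
  have hGc : (Gram k 2).mulVec c = fun _ => ((k + 1).factorial : ℝ) := by
    ext p
    let t : AlternatingPairing (@EvenVal (2 * k)) :=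
      ⟨p.1, (isNonCrossing_val p).involutive, (isNonCrossing_val p).alternates_even⟩
    rw [← Fintype.card_bool, gram_eq_mul_transpose, ← Matrix.mulVec_mulVec, Matrix.mulVec_transpose,
      hc]
    exact (pairingVector_dotProduct_sum t).trans (by rw [card_evenVal])
  have hsum : ∑ p, c p = (k.factorial : ℝ) := by
    have heval := congrFun hc fun _ => true
    rw [sum_pairingVector_const true (revPairing k), card_evenVal] at heval
    simpa [Matrix.vecMul, dotProduct, pairingMatrix, pairingVector, Function.comp_def] using heval
  have hfact : (k.factorial : ℝ) ≠ 0 := by positivity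
  have hmul := mul_sum_sum_inv_eq_sum (isUnit_gram_two k) hGc
  rw [hsum, Nat.factorial_succ, Nat.cast_mul] at hmul
  rw [eq_div_iff (by positivity)]
  refine mul_left_cancel₀ hfact ?_
  push_cast at hmul
  linarith
end

section
/- For k ≥ 1 let N_k be the number of ordered pairs (p,q) ∈ D(k) × D(k) with d(p,q) = 1, and set N_0 = 0. Then for every real number z with |z| < 1/2: ∑_{k=0}^∞ N_k · z^{2k} = 32z⁴ / ((1 + √(1 − 4z²))⁴ · √(1 − 4z²)). -/
open scoped BigOperators

/-- N_k : the number of ordered pairs (p,q) of diagrams in D(k) at loop distance 1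
(note that N_0 = 0, since loopDist is identically 0 on D(0)). -/
noncomputable def Ncount (k : ℕ) : ℕ :=
  Nat.card {pq : NCPair k × NCPair k // loopDist pq.1 pq.2 = 1}

/-! Two diagrams are at loop distance `1` exactly when all points but four have the same partner in
both: a point with a common partner lies on a loop with two points, every other loop has at least
four. Let `C` and `N` count the diagrams, respectively the ordered pairs of neighbors, by number of
points, and split a pair `(p, q)` of neighbors according to the partners of the first point `a`.
* If these agree, then their common arc separates the remaining points into two intervals, and `p`
  and `q` are neighbors on one of them and equal on the other. This contributes `2 * X ^ 2 * C * N`.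
* If `p a < q a`, then `c = p (q a)` splits `p` into non-crossing pairings of the points before `c`
  and of those from `c` on, and `q` is recovered from `p` by exchanging the partners of `a` and `c`.
  Conversely any two nonempty pairings arise, so this and the case `q a < p a` contribute
  `2 * (C - 1) ^ 2`.

Hence `N = 2 * (C - 1) ^ 2 / (1 - 2 * X ^ 2 * C)`, where `1 / (1 - 2 * X ^ 2 * C)` is the series of
the central binomial coefficients in `X ^ 2`. -/

section FormalSeries

open PowerSeries

variable (R : Type*) [CommRing R]

/-- The generating series of the Catalan numbers, with coefficients in `R`. -/
noncomputable def catalanGF : PowerSeries R := catalanSeries.map (Nat.castRingHom R)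

/-- The generating series of the central binomial coefficients, with coefficients in `R`. -/
noncomputable def centralBinomGF : PowerSeries R := mk fun n => (n.centralBinom : R)

lemma catalanGF_eq_one_add : catalanGF R = 1 + X * catalanGF R ^ 2 := by
  have h := congrArg (map (Nat.castRingHom R)) catalanSeries_sq_mul_X_add_one
  simp only [map_add, map_mul, map_pow, map_one, map_X] at h
  rw [catalanGF, mul_comm, add_comm, h]

lemma derivative_X_mul_catalanGF : derivative R (X * catalanGF R) = centralBinomGF R := by
  ext n
  rw [coeff_derivative, coeff_succ_X_mul, catalanGF, coeff_map, catalanSeries_coeff,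
    centralBinomGF, coeff_mk, ← succ_mul_catalan_eq_centralBinom]
  push_cast
  ring

/-- Differentiate the quadratic equation `Y = X + Y ^ 2` satisfied by `Y = X * catalanGF R`. -/
lemma centralBinomGF_eq_one_add :
    centralBinomGF R = 1 + 2 * X * catalanGF R * centralBinomGF R := by
  have hY : X * catalanGF R = X + (X * catalanGF R) ^ 2 := by
    linear_combination X * catalanGF_eq_one_add R
  have h := congrArg (derivative R) hY
  rw [map_add, Derivation.leibniz_pow, derivative_X, derivative_X_mul_catalanGF] at h
  simpa [mul_assoc] using h

/-- The generating series of the numbers of neighboring pairs of diagrams, in closed form. -/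
noncomputable def neighborGF : PowerSeries R :=
  2 * (catalanGF R - 1) ^ 2 * centralBinomGF R

lemma neighborGF_eq_add :
    neighborGF R = 2 * X * catalanGF R * neighborGF R + 2 * (catalanGF R - 1) ^ 2 := by
  rw [neighborGF]
  linear_combination 2 * (catalanGF R - 1) ^ 2 * centralBinomGF_eq_one_add R

/-- Free of powers and numerals, so that it can be evaluated factor by factor. -/
lemma neighborGF_eq_mul :
    neighborGF R = (1 + 1) * (X * X * catalanGF R * catalanGF R * catalanGF R * catalanGF R *
      centralBinomGF R) := by
  have h : catalanGF R - 1 = X * catalanGF R ^ 2 := by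
    linear_combination catalanGF_eq_one_add R
  rw [neighborGF, h]
  ring

end FormalSeries

section AbsoluteEvaluation

open PowerSeries

/-- The power series `φ` converges absolutely at `x`, with sum `v`. -/
structure HasAbsSumAt {R : Type*} [NormedCommRing R] (φ : PowerSeries R) (x v : R) : Prop where
  summable_norm : Summable fun n => ‖coeff n φ * x ^ n‖
  hasSum : HasSum (fun n => coeff n φ * x ^ n) v

namespace HasAbsSumAt

variable {R : Type*} [NormedCommRing R] {φ ψ : PowerSeries R} {x v w : R}

lemma of_summable_norm [CompleteSpace R] (h : Summable fun n => ‖coeff n φ * x ^ n‖) :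
    HasAbsSumAt φ x (∑' n, coeff n φ * x ^ n) :=
  ⟨h, h.of_norm.hasSum⟩

lemma add (hφ : HasAbsSumAt φ x v) (hψ : HasAbsSumAt ψ x w) : HasAbsSumAt (φ + ψ) x (v + w) where
  summable_norm := by
    simp only [map_add, add_mul]
    exact (hφ.summable_norm.add hψ.summable_norm).of_nonneg_of_le (fun _ => norm_nonneg _)
      fun _ => norm_add_le _ _
  hasSum := by simpa only [map_add, add_mul] using hφ.hasSum.add hψ.hasSum

lemma mul [CompleteSpace R] (hφ : HasAbsSumAt φ x v) (hψ : HasAbsSumAt ψ x w) :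
    HasAbsSumAt (φ * ψ) x (v * w) := by
  have coeff_eq (n : ℕ) : coeff n (φ * ψ) * x ^ n =
      ∑ ij ∈ Finset.HasAntidiagonal.antidiagonal n,
        (coeff ij.1 φ * x ^ ij.1) * (coeff ij.2 ψ * x ^ ij.2) := by
    rw [coeff_mul, Finset.sum_mul]
    refine Finset.sum_congr rfl fun ij hij => ?_
    rw [← Finset.HasAntidiagonal.mem_antidiagonal.1 hij, pow_add]
    ring
  have h := summable_norm_sum_mul_antidiagonal_of_summable_norm hφ.summable_norm hψ.summable_norm
  refine ⟨by simpa only [coeff_eq] using h, ?_⟩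
  simp only [coeff_eq]
  rw [← hφ.hasSum.tsum_eq, ← hψ.hasSum.tsum_eq,
    tsum_mul_tsum_eq_tsum_sum_antidiagonal_of_summable_norm hφ.summable_norm hψ.summable_norm]
  exact h.of_norm.hasSum

lemma monomial (n : ℕ) (r x : R) : HasAbsSumAt (monomial n r) x (r * x ^ n) := by
  have h (i : ℕ) (hi : i ≠ n) : coeff i (PowerSeries.monomial n r) * x ^ i = 0 := by
    rw [coeff_monomial, if_neg hi, zero_mul]
  refine ⟨summable_of_ne_finset_zero (s := {n}) fun i hi => ?_, ?_⟩
  · rw [h i (by simpa using hi), norm_zero]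
  · simpa using hasSum_single n h

lemma one (x : R) : HasAbsSumAt 1 x 1 := by
  simpa using monomial 0 1 x

lemma X (x : R) : HasAbsSumAt X x x := by
  simpa [X_eq] using monomial 1 1 x

lemma unique (hφ : HasAbsSumAt φ x v) (hφ' : HasAbsSumAt φ x w) : v = w :=
  hφ.hasSum.unique hφ'.hasSum

end HasAbsSumAt

lemma summable_norm_coeff_mul_pow {𝕜 : Type*} [NormedField 𝕜] {φ : PowerSeries 𝕜} {r : ℝ} {x : 𝕜}
    (hφ : ∀ n, ‖coeff n φ‖ ≤ r ^ n) (hx : r * ‖x‖ < 1) :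
    Summable fun n => ‖coeff n φ * x ^ n‖ := by
  have hr : 0 ≤ r := by simpa using (norm_nonneg _).trans (hφ 1)
  refine (summable_geometric_of_lt_one (by positivity) hx).of_nonneg_of_le
    (fun _ => norm_nonneg _) fun n => ?_
  rw [norm_mul, norm_pow, mul_pow]
  gcongr
  exact hφ n

lemma norm_coeff_centralBinomGF_le (n : ℕ) : ‖coeff n (centralBinomGF ℝ)‖ ≤ 4 ^ n := by
  rw [centralBinomGF, coeff_mk, Real.norm_natCast]
  exact_mod_cast Nat.centralBinom_le_four_pow n

lemma norm_coeff_catalanGF_le (n : ℕ) : ‖coeff n (catalanGF ℝ)‖ ≤ 4 ^ n := by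
  rw [catalanGF, coeff_map, catalanSeries_coeff, Nat.coe_castRingHom, Real.norm_natCast]
  have h : catalan n ≤ n.centralBinom := by
    rw [← succ_mul_catalan_eq_centralBinom]
    exact Nat.le_mul_of_pos_left _ n.succ_pos
  exact_mod_cast h.trans (Nat.centralBinom_le_four_pow n)

lemma exists_hasAbsSumAt {𝕜 : Type*} [NormedField 𝕜] [CompleteSpace 𝕜] {φ : PowerSeries 𝕜}
    {r : ℝ} {x : 𝕜} (hφ : ∀ n, ‖coeff n φ‖ ≤ r ^ n) (hx : r * ‖x‖ < 1) : ∃ v, HasAbsSumAt φ x v :=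
  ⟨_, .of_summable_norm (summable_norm_coeff_mul_pow hφ hx)⟩

variable {x : ℝ}

/-- The two sums `c` and `b` satisfy `c = 1 + x * c ^ 2` and `b * (1 - 2 * x * c) = 1`:
the first makes `1 - 2 * x * c` a square root of `1 - 4 * x`, the second the positive one. -/
lemma hasAbsSumAt_catalanGF_centralBinomGF (hx₀ : 0 ≤ x) (hx : x < 1 / 4) :
    HasAbsSumAt (catalanGF ℝ) x (2 / (1 + √(1 - 4 * x))) ∧
      HasAbsSumAt (centralBinomGF ℝ) x (1 / √(1 - 4 * x)) := by
  have hx₄ : 4 * ‖x‖ < 1 := by rw [Real.norm_of_nonneg hx₀]; linarith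
  obtain ⟨c, hc⟩ := exists_hasAbsSumAt norm_coeff_catalanGF_le hx₄
  obtain ⟨b, hb⟩ := exists_hasAbsSumAt norm_coeff_centralBinomGF_le hx₄
  have hc_eq : c = 1 + x * c ^ 2 := by
    have h := (HasAbsSumAt.one x).add ((HasAbsSumAt.X x).mul (hc.mul hc))
    rw [← sq, ← sq, ← catalanGF_eq_one_add] at h
    exact hc.unique h
  have hb_eq : b = 1 + 2 * x * c * b := by
    have h := (HasAbsSumAt.one x).add
      (((((HasAbsSumAt.one x).add (.one x)).mul (.X x)).mul hc).mul hb)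
    rw [one_add_one_eq_two, one_add_one_eq_two, ← centralBinomGF_eq_one_add] at h
    exact hb.unique h
  have hb₀ : 0 ≤ b := hb.hasSum.nonneg fun n => by
    rw [centralBinomGF, coeff_mk]
    positivity
  have h_sqrt : √(1 - 4 * x) = 1 - 2 * x * c := by
    rw [show 1 - 4 * x = (1 - 2 * x * c) ^ 2 by linear_combination 4 * x * hc_eq, Real.sqrt_sq]
    by_contra! h
    nlinarith
  have h_pos : 0 < √(1 - 4 * x) := Real.sqrt_pos.2 (by linarith)
  have hc_val : c = 2 / (1 + √(1 - 4 * x)) := by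
    rw [eq_div_iff (by positivity), h_sqrt]
    linear_combination 2 * hc_eq
  have hb_val : b = 1 / √(1 - 4 * x) := by
    rw [eq_div_iff h_pos.ne', h_sqrt]
    linear_combination hb_eq
  exact ⟨hc_val ▸ hc, hb_val ▸ hb⟩

lemma hasAbsSumAt_neighborGF (hx₀ : 0 ≤ x) (hx : x < 1 / 4) :
    HasAbsSumAt (neighborGF ℝ) x
      (32 * x ^ 2 / ((1 + √(1 - 4 * x)) ^ 4 * √(1 - 4 * x))) := by
  obtain ⟨hC, hB⟩ := hasAbsSumAt_catalanGF_centralBinomGF hx₀ hx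
  rw [neighborGF_eq_mul]
  convert ((HasAbsSumAt.one x).add (.one x)).mul
    (((((((HasAbsSumAt.X x).mul (.X x)).mul hC).mul hC).mul hC).mul hC).mul hB) using 1
  field_simp
  ring

end AbsoluteEvaluation

section Disagreement

open Function

variable {α : Type*} {f g : α → α} {x a c : α}

/-- The set of points at which two maps differ; for two pair partitions encoded as involutions,
the set of points with different partners. -/
def disagreement (f g : α → α) : Set α := {x | f x ≠ g x}

lemma mem_disagreement : x ∈ disagreement f g ↔ f x ≠ g x := Iff.rfl

lemma disagreement_self (f : α → α) : disagreement f f = ∅ := by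
  simp [disagreement]

lemma disagreement_nonempty : (disagreement f g).Nonempty ↔ f ≠ g :=
  Function.ne_iff.symm

lemma disagreement_comm (f g : α → α) : disagreement f g = disagreement g f :=
  Set.ext fun _ => ne_comm

lemma insert_subset_disagreement (hf : Involutive f) (hg : Involutive g)
    (hx : x ∈ disagreement f g) : {x, f x, g x, f (g x)} ⊆ disagreement f g := by
  rw [mem_disagreement] at hx
  simp only [Set.insert_subset_iff, Set.singleton_subset_iff, mem_disagreement]
  grind [Involutive]

section SameFixedPoints

variable (hf : Involutive f) (hg : Involutive g) (hfg : ∀ x, f x = x ↔ g x = x)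
include hf hg hfg

lemma ncard_insert_eq_four (hx : x ∈ disagreement f g) :
    ({x, f x, g x, f (g x)} : Set α).ncard = 4 := by
  rw [mem_disagreement] at hx
  have hfx : f x ≠ x := by grind
  have hgx : f (g x) ≠ g x := by grind [Involutive]
  have hfgx : f (g x) ≠ f x := by grind [hf.injective.ne]
  rw [Set.ncard_insert_of_notMem, Set.ncard_insert_of_notMem, Set.ncard_pair] <;>
  grind [Involutive]

lemma four_le_ncard_disagreement (hfin : (disagreement f g).Finite) (hne : f ≠ g) :
    4 ≤ (disagreement f g).ncard := by
  obtain ⟨x, hx⟩ := disagreement_nonempty.2 hne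
  rw [← ncard_insert_eq_four hf hg hfg hx]
  exact Set.ncard_le_ncard (insert_subset_disagreement hf hg hx) hfin

variable (h : (disagreement f g).ncard = 4) (hx : x ∈ disagreement f g)
include h hx

lemma disagreement_eq_insert : disagreement f g = {x, f x, g x, f (g x)} := by
  refine (Set.eq_of_subset_of_ncard_le (insert_subset_disagreement hf hg hx) ?_ ?_).symm
  · rw [h, ncard_insert_eq_four hf hg hfg hx]
  · exact Set.finite_of_ncard_ne_zero (by omega)

lemma apply_apply_comm_of_ncard_eq_four : g (f x) = f (g x) := by
  have hD := disagreement_eq_insert hf hg hfg h hx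
  have hmem : g (f x) ∈ disagreement f g :=
    insert_subset_disagreement hf hg (hD ▸ by simp : f x ∈ disagreement f g) (by simp)
  rw [hD] at hmem
  rw [mem_disagreement] at hx
  grind [Involutive]

end SameFixedPoints

/-- The involution obtained from `f` by exchanging the partners of `a` and `c`. -/
def swapPartners [DecidableEq α] (f : α → α) (a c : α) (x : α) : α :=
  Equiv.swap a c (f (Equiv.swap a c x))

variable [DecidableEq α]

lemma eq_swapPartners (hf : Involutive f) (hg : Involutive g) (hfg : ∀ x, f x = x ↔ g x = x)
    (h : (disagreement f g).ncard = 4) (hx : x ∈ disagreement f g) :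
    g = swapPartners f x (f (g x)) := by
  have hD := disagreement_eq_insert hf hg hfg h hx
  have hcomm := apply_apply_comm_of_ncard_eq_four hf hg hfg h hx
  funext y
  have hy : f y = g y ∨ y = x ∨ y = f x ∨ y = g x ∨ y = f (g x) := by
    rw [or_iff_not_imp_left]
    exact fun hy => hD.subset hy
  rw [mem_disagreement] at hx
  grind [swapPartners, Involutive]

lemma swapPartners_involutive (hf : Involutive f) (a c : α) : Involutive (swapPartners f a c) :=
  fun x => by simp [swapPartners, hf (Equiv.swap a c x)]

section DistinctArcs

variable (hf : Involutive f) (ha : f a ≠ a) (hc : f c ≠ c) (hfac : f a ≠ c)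
include hf ha hc hfac

lemma swapPartners_cases (x : α) :
    (x = a ∧ swapPartners f a c x = f c) ∨ (x = c ∧ swapPartners f a c x = f a) ∨
      (x = f a ∧ swapPartners f a c x = c) ∨ (x = f c ∧ swapPartners f a c x = a) ∨
      (x ≠ a ∧ x ≠ c ∧ x ≠ f a ∧ x ≠ f c ∧ swapPartners f a c x = f x) := by
  by_cases x = a <;> by_cases x = c <;> grind [swapPartners, Involutive]

lemma ncard_disagreement_swapPartners (hac : a ≠ c) :
    (disagreement f (swapPartners f a c)).ncard = 4 := by
  have h : disagreement f (swapPartners f a c) = {a, f a, c, f c} := by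
    ext x
    have := swapPartners_cases hf ha hc hfac x
    simp only [mem_disagreement, Set.mem_insert_iff, Set.mem_singleton_iff]
    grind [Involutive]
  rw [h, Set.ncard_insert_of_notMem, Set.ncard_insert_of_notMem, Set.ncard_pair] <;>
  grind [Involutive]

end DistinctArcs

end Disagreement

section Fibers

variable {α β : Type*} {f : α → β} {s : Set α} {n : ℕ}

lemma mul_ncard_image_le (hs : s.Finite) (h : ∀ x ∈ s, n ≤ {y ∈ s | f y = f x}.ncard) :
    n * (f '' s).ncard ≤ s.ncard := by
  classical
  lift s to Finset α using hs
  rw [← Finset.coe_image, Set.ncard_coe_finset, Set.ncard_coe_finset]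
  refine Finset.mul_card_image_le_card s n (Finset.forall_mem_image.2 fun x hx => ?_)
  simpa [← Set.ncard_coe_finset] using h x hx

lemma mul_ncard_image_eq (hs : s.Finite) (h : ∀ x ∈ s, {y ∈ s | f y = f x}.ncard = n) :
    n * (f '' s).ncard = s.ncard := by
  classical
  lift s to Finset α using hs
  rw [← Finset.coe_image, Set.ncard_coe_finset, Set.ncard_coe_finset,
    Finset.card_eq_sum_card_image f, Finset.sum_const_nat, mul_comm]
  refine Finset.forall_mem_image.2 fun x hx => ?_
  simpa [← Set.ncard_coe_finset] using h x hx

end Fibers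

section Loops

open MulAction Function

variable {α : Type*}

open scoped Pointwise in
lemma orbit_closure_subset {s : Set (Equiv.Perm α)} {S : Set α} {x : α}
    (hS : ∀ g ∈ s, ∀ y, g y ∈ S ↔ y ∈ S) (hx : x ∈ S) : orbit (Subgroup.closure s) x ⊆ S := by
  have h : Subgroup.closure s ≤ stabilizer (Equiv.Perm α) S :=
    (Subgroup.closure_le _).2 fun g hg => mem_stabilizer_set.2 (hS g hg)
  rintro _ ⟨⟨g, hg⟩, rfl⟩
  exact (mem_stabilizer_set.1 (h hg) x).2 hx

/-- The loops of the diagram obtained by gluing the pair partitions `p` and `q`, encoded as the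
orbits of the group generated by `p` and `q`. -/
abbrev Loop (p q : Equiv.Perm α) : Type _ :=
  orbitRel.Quotient (Subgroup.closure ({p, q} : Set (Equiv.Perm α))) α

/-- The loop through a given point. -/
def loopOf (p q : Equiv.Perm α) (x : α) : Loop p q := Quotient.mk'' x

variable {p q : Equiv.Perm α} {x y : α}

lemma loopOf_surjective (p q : Equiv.Perm α) : Surjective (loopOf p q) :=
  Quotient.mk''_surjective

lemma loopOf_eq_iff :
    loopOf p q y = loopOf p q x ↔ y ∈ orbit (Subgroup.closure ({p, q} : Set (Equiv.Perm α))) x :=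
  Quotient.eq''

lemma loopOf_apply_left (x : α) : loopOf p q (p x) = loopOf p q x :=
  loopOf_eq_iff.2 ⟨⟨p, Subgroup.subset_closure (by simp)⟩, rfl⟩

lemma loopOf_apply_right (x : α) : loopOf p q (q x) = loopOf p q x :=
  loopOf_eq_iff.2 ⟨⟨q, Subgroup.subset_closure (by simp)⟩, rfl⟩

lemma mem_of_loopOf_eq {S : Set α} (hp : ∀ y, p y ∈ S ↔ y ∈ S) (hq : ∀ y, q y ∈ S ↔ y ∈ S)
    (h : loopOf p q y = loopOf p q x) (hx : x ∈ S) : y ∈ S :=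
  orbit_closure_subset (by simpa using ⟨hp, hq⟩) hx (loopOf_eq_iff.1 h)

section Involutive

variable (hp : Involutive p) (hq : Involutive q)
include hp hq

lemma mem_disagreement_of_loopOf_eq (h : loopOf p q y = loopOf p q x)
    (hx : x ∈ disagreement p q) : y ∈ disagreement p q := by
  refine mem_of_loopOf_eq (fun y => ?_) (fun y => ?_) h hx <;>
  grind [mem_disagreement, Involutive]

lemma loopOf_eq_iff_of_notMem_disagreement (hx : x ∉ disagreement p q) :
    loopOf p q y = loopOf p q x ↔ y = x ∨ y = p x := by
  refine ⟨fun h => ?_, ?_⟩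
  · rw [mem_disagreement, not_not] at hx
    refine mem_of_loopOf_eq (S := {x, p x}) (fun y => ?_) (fun y => ?_) h (by simp) <;>
    simp only [Set.mem_insert_iff, Set.mem_singleton_iff] <;>
    grind [Involutive]
  · rintro (rfl | rfl)
    exacts [rfl, loopOf_apply_left x]

lemma card_loop [Finite α] :
    Nat.card (Loop p q) =
      (loopOf p q '' disagreement p q).ncard + (loopOf p q '' (disagreement p q)ᶜ).ncard := by
  rw [← Set.ncard_univ, ← (loopOf_surjective p q).range_eq, ← Set.image_univ,
    ← Set.union_compl_self (disagreement p q), Set.image_union, Set.ncard_union_eq]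
  rw [Set.disjoint_left]
  rintro _ ⟨x, hx, rfl⟩ ⟨y, hy, h⟩
  exact hy (mem_disagreement_of_loopOf_eq hp hq h hx)

variable [Finite α] (hp₀ : ∀ x, p x ≠ x)
include hp₀

lemma two_mul_ncard_loopOf_image_compl_disagreement :
    2 * (loopOf p q '' (disagreement p q)ᶜ).ncard = (disagreement p q)ᶜ.ncard := by
  refine mul_ncard_image_eq (Set.toFinite _) fun x hx => ?_
  rw [← Set.ncard_pair (hp₀ x).symm]
  congr 1
  ext y
  have hpx : p x ∉ disagreement p q := fun h =>
    hx (mem_disagreement_of_loopOf_eq hp hq (loopOf_apply_left x).symm h)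
  simp only [Set.mem_ofPred_eq, loopOf_eq_iff_of_notMem_disagreement hp hq hx]
  grind

variable (hq₀ : ∀ x, q x ≠ x)
include hq₀

lemma four_mul_ncard_loopOf_image_disagreement_le :
    4 * (loopOf p q '' disagreement p q).ncard ≤ (disagreement p q).ncard := by
  refine mul_ncard_image_le (Set.toFinite _) fun x hx => ?_
  rw [← ncard_insert_eq_four hp hq (by simp [hp₀, hq₀]) hx]
  refine Set.ncard_le_ncard (fun y hy => ⟨insert_subset_disagreement hp hq hx hy, ?_⟩)
    (Set.toFinite _)
  rcases hy with rfl | rfl | rfl | rfl <;> simp only [loopOf_apply_left, loopOf_apply_right]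

/-- Points with a common partner lie on loops with two points, all other loops have at least
four points. -/
lemma card_eq_two_mul_card_loop_add_one_iff :
    Nat.card α = 2 * (Nat.card (Loop p q) + 1) ↔ (disagreement p q).ncard = 4 := by
  have h_compl := two_mul_ncard_loopOf_image_compl_disagreement hp hq hp₀
  have h_le := four_mul_ncard_loopOf_image_disagreement_le hp hq hp₀ hq₀
  have h_card := card_loop hp hq
  have h_add := Set.ncard_add_ncard_compl (disagreement p q)
  have h_pos (h : (disagreement p q).ncard ≠ 0) : 0 < (loopOf p q '' disagreement p q).ncard :=
    (Set.ncard_pos (Set.toFinite _)).2 ((Set.nonempty_of_ncard_ne_zero h).image _)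
  omega

end Involutive

end Loops

section NoncrossingPairings

open Function

/-- Non-crossing pair partitions of the interval `{x | a ≤ x ∧ x < b}`, encoded as involutions
of `ℕ` whose fixed points are the points outside the interval. Extending by the identity makes all
intervals share one ambient type, and for an involution it suffices to exclude crossings on one
side of an arc. -/
structure IsNoncrossingPairing (a b : ℕ) (f : ℕ → ℕ) : Prop where
  involutive : Involutive f
  apply_eq_self_iff : ∀ x, f x = x ↔ x < a ∨ b ≤ x
  noncrossing : ∀ ⦃x y⦄, x < y → y < f x → f y < f x

/-- The pairing of an interval which agrees with `f` on `{x | u ≤ x ∧ x < v}`. -/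
def restrict (u v : ℕ) (f : ℕ → ℕ) (x : ℕ) : ℕ := if u ≤ x ∧ x < v then f x else x

/-- The juxtaposition of a pairing `f` to the left of `c` and a pairing `g` to the right. -/
def concat (c : ℕ) (f g : ℕ → ℕ) (x : ℕ) : ℕ := if x < c then f x else g x

/-- The pairing with an arc from `a` to `c`, with `f` below the arc and `g` to its right. -/
def nest (a c : ℕ) (f g : ℕ → ℕ) (x : ℕ) : ℕ :=
  if x = a then c else if x = c then a else if x < c then f x else g x

variable {a b c u v x y : ℕ} {f g f' g' : ℕ → ℕ}

namespace IsNoncrossingPairing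

lemma lt_apply (hf : IsNoncrossingPairing a b f) (hxy : x < y) (hy : y < f x) : x < f y := by
  have hinv := hf.involutive
  have h := @(hf.noncrossing (x := f y) (y := x))
  grind [Involutive]

lemma outside_or_inside (hf : IsNoncrossingPairing a b f) (x : ℕ) :
    ((x < a ∨ b ≤ x) ∧ f x = x) ∨ (a ≤ x ∧ x < b ∧ a ≤ f x ∧ f x < b ∧ f x ≠ x) := by
  have h := hf.apply_eq_self_iff x
  have h' := hf.apply_eq_self_iff (f x)
  have hinv := hf.involutive x
  grind

lemma restrict (hf : IsNoncrossingPairing a b f) (hu : a ≤ u) (hv : v ≤ b)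
    (hmaps : ∀ x, u ≤ x → x < v → u ≤ f x ∧ f x < v) :
    IsNoncrossingPairing u v (restrict u v f) := by
  refine ⟨fun x => ?_, fun x => ?_, fun x y => ?_⟩ <;> unfold _root_.restrict
  · have := hf.involutive x
    grind
  · have := hf.outside_or_inside x
    grind
  · have := @hf.noncrossing x y
    grind

lemma concat (hac : a ≤ c) (hcb : c ≤ b) (hf : IsNoncrossingPairing a c f)
    (hg : IsNoncrossingPairing c b g) : IsNoncrossingPairing a b (concat c f g) := by
  refine ⟨fun x => ?_, fun x => ?_, fun x y => ?_⟩ <;> unfold _root_.concat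
  · grind [hf.outside_or_inside x, hg.outside_or_inside x, hf.involutive x, hg.involutive x]
  · grind [hf.outside_or_inside x, hg.outside_or_inside x]
  · have hf_nc := @hf.noncrossing x y
    have hg_nc := @hg.noncrossing x y
    grind [hf.outside_or_inside x, hg.outside_or_inside x, hf.outside_or_inside y,
      hg.outside_or_inside y]

lemma nest (hac : a < c) (hcb : c < b) (hf : IsNoncrossingPairing (a + 1) c f)
    (hg : IsNoncrossingPairing (c + 1) b g) : IsNoncrossingPairing a b (nest a c f g) := by
  refine ⟨fun x => ?_, fun x => ?_, fun x y => ?_⟩ <;> unfold _root_.nest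
  · grind [hf.outside_or_inside x, hg.outside_or_inside x, hf.involutive x, hg.involutive x]
  · grind [hf.outside_or_inside x, hg.outside_or_inside x]
  · have hf_nc := @hf.noncrossing x y
    have hg_nc := @hg.noncrossing x y
    grind [hf.outside_or_inside x, hg.outside_or_inside x, hf.outside_or_inside y,
      hg.outside_or_inside y]

lemma swapPartners (hf : IsNoncrossingPairing a b f) (hac : a < c) (hcb : c < b)
    (hc : ∀ x, x < c → f x < c) : IsNoncrossingPairing a b (swapPartners f a c) := by
  have ha_cases := hf.outside_or_inside a
  have hc_cases := hf.outside_or_inside c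
  have hc_le := hc (f c)
  rw [hf.involutive] at hc_le
  have hfa := hc a hac
  have swap_cases := swapPartners_cases hf.involutive (a := a) (c := c) (by omega) (by omega)
    (by omega)
  refine ⟨swapPartners_involutive hf.involutive a c, fun x => ?_, fun x y hxy hy => ?_⟩
  · grind [hf.outside_or_inside x]
  have hx_nc := @hf.noncrossing x y
  have ha_nc := @hf.noncrossing a
  have hc_nc := @hf.noncrossing c
  rcases swap_cases x with hx | hx | hx | hx | hx <;>
  rcases swap_cases y with hy' | hy' | hy' | hy' | hy' <;>
  grind [hc x, hc y, hf.outside_or_inside x, hf.outside_or_inside y, @ha_nc x, @ha_nc y, @hc_nc x,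
    @hc_nc y]

lemma eq_id (hf : IsNoncrossingPairing a b f) (hba : b ≤ a) : f = id :=
  funext fun x => (hf.apply_eq_self_iff x).2 (by omega)

lemma apply_left (hf : IsNoncrossingPairing a b f) (hab : a < b) : a < f a ∧ f a < b := by
  have := hf.outside_or_inside a
  omega

lemma concat_restrict (hf : IsNoncrossingPairing a b f) :
    _root_.concat c (_root_.restrict a c f) (_root_.restrict c b f) = f := by
  funext x
  grind [_root_.concat, _root_.restrict, hf.outside_or_inside x]

lemma restrict_left_concat (hf : IsNoncrossingPairing a c f) :
    _root_.restrict a c (_root_.concat c f g) = f := by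
  funext x
  grind [_root_.concat, _root_.restrict, hf.outside_or_inside x]

lemma restrict_right_concat (hg : IsNoncrossingPairing c b g) :
    _root_.restrict c b (_root_.concat c f g) = g := by
  funext x
  grind [_root_.concat, _root_.restrict, hg.outside_or_inside x]

lemma restrict_left (hf : IsNoncrossingPairing a b f) (hcb : c ≤ b) (hc : ∀ x, x < c → f x < c) :
    IsNoncrossingPairing a c (_root_.restrict a c f) :=
  hf.restrict le_rfl hcb fun x _ hx => ⟨by have := hf.outside_or_inside x; omega, hc x hx⟩

lemma restrict_right (hf : IsNoncrossingPairing a b f) (hac : a ≤ c)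
    (hc : ∀ x, x < c → f x < c) : IsNoncrossingPairing c b (_root_.restrict c b f) := by
  refine hf.restrict hac le_rfl fun x hx hxb => ?_
  have := hc (f x)
  rw [hf.involutive] at this
  have := hf.outside_or_inside x
  omega

lemma restrict_below (hf : IsNoncrossingPairing a b f) (hab : a < b) :
    IsNoncrossingPairing (a + 1) (f a) (_root_.restrict (a + 1) (f a) f) := by
  refine hf.restrict (by omega) (hf.apply_left hab).2.le fun x hx hx' => ?_
  have := hf.lt_apply hx hx'
  have := hf.noncrossing hx hx'
  omega

lemma restrict_after (hf : IsNoncrossingPairing a b f) (hab : a < b) :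
    IsNoncrossingPairing (f a + 1) b (_root_.restrict (f a + 1) b f) := by
  have ha := hf.apply_left hab
  refine hf.restrict (by omega) le_rfl fun x hx hxb => ?_
  have h_lt := @hf.lt_apply
  have := hf.involutive x
  have := hf.involutive a
  grind [hf.outside_or_inside x, @hf.noncrossing a (f x)]

lemma nest_restrict (hf : IsNoncrossingPairing a b f) (hab : a < b) :
    _root_.nest a (f a) (_root_.restrict (a + 1) (f a) f) (_root_.restrict (f a + 1) b f) = f := by
  have ha := hf.apply_left hab
  have := hf.involutive a
  funext x
  grind [_root_.nest, _root_.restrict, hf.outside_or_inside x]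

lemma restrict_below_nest (hf : IsNoncrossingPairing (a + 1) c f) :
    _root_.restrict (a + 1) c (_root_.nest a c f g) = f := by
  funext x
  grind [_root_.nest, _root_.restrict, hf.outside_or_inside x]

lemma restrict_after_nest (hac : a < c) (hg : IsNoncrossingPairing (c + 1) b g) :
    _root_.restrict (c + 1) b (_root_.nest a c f g) = g := by
  funext x
  grind [_root_.nest, _root_.restrict, hg.outside_or_inside x]

lemma finite_disagreement (hf : IsNoncrossingPairing a b f) (hg : IsNoncrossingPairing a b g) :
    (disagreement f g).Finite :=
  (Set.finite_Iio b).subset fun x hx => by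
    by_contra hxb
    rw [Set.mem_Iio, not_lt] at hxb
    rw [mem_disagreement] at hx
    grind [hf.outside_or_inside x, hg.outside_or_inside x]

lemma apply_eq_self_iff_apply_eq_self (hf : IsNoncrossingPairing a b f)
    (hg : IsNoncrossingPairing a b g) (x : ℕ) : f x = x ↔ g x = x :=
  (hf.apply_eq_self_iff x).trans (hg.apply_eq_self_iff x).symm

lemma four_le_ncard_disagreement (hf : IsNoncrossingPairing a b f)
    (hg : IsNoncrossingPairing a b g) (hne : f ≠ g) : 4 ≤ (disagreement f g).ncard :=
  _root_.four_le_ncard_disagreement hf.involutive hg.involutive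
    (hf.apply_eq_self_iff_apply_eq_self hg) (hf.finite_disagreement hg) hne

lemma ncard_disagreement_nest (hac : a < c) (hf : IsNoncrossingPairing (a + 1) c f)
    (hf' : IsNoncrossingPairing (a + 1) c f') (hg : IsNoncrossingPairing (c + 1) b g)
    (hg' : IsNoncrossingPairing (c + 1) b g') :
    (disagreement (_root_.nest a c f g) (_root_.nest a c f' g')).ncard =
      (disagreement f f').ncard + (disagreement g g').ncard := by
  rw [← Set.ncard_union_eq ?_ (hf.finite_disagreement hf') (hg.finite_disagreement hg')]
  · congr 1
    ext x
    simp only [Set.mem_union, mem_disagreement]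
    grind [_root_.nest, hf.outside_or_inside x, hf'.outside_or_inside x, hg.outside_or_inside x,
      hg'.outside_or_inside x]
  · refine Set.disjoint_left.2 fun x hx hx' => ?_
    rw [mem_disagreement] at hx hx'
    grind [hf.outside_or_inside x, hf'.outside_or_inside x, hg.outside_or_inside x,
      hg'.outside_or_inside x]

lemma ncard_disagreement_nest_eq_four_iff (hac : a < c) (hf : IsNoncrossingPairing (a + 1) c f)
    (hf' : IsNoncrossingPairing (a + 1) c f') (hg : IsNoncrossingPairing (c + 1) b g)
    (hg' : IsNoncrossingPairing (c + 1) b g') :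
    (disagreement (_root_.nest a c f g) (_root_.nest a c f' g')).ncard = 4 ↔
      (disagreement f f').ncard = 4 ∧ g = g' ∨ f = f' ∧ (disagreement g g').ncard = 4 := by
  rw [ncard_disagreement_nest hac hf hf' hg hg']
  have hf_four := hf.four_le_ncard_disagreement hf'
  have hg_four := hg.four_le_ncard_disagreement hg'
  by_cases hff : f = f' <;> by_cases hgg : g = g'
  · simp [hff, hgg, disagreement_self]
  · simp [hff, hgg, disagreement_self]
  · simp [hff, hgg, disagreement_self]
  · have := hf_four hff
    have := hg_four hgg
    simp only [hff, hgg, and_false, false_and, or_false, iff_false]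
    omega

section Neighbors

variable (hf : IsNoncrossingPairing a b f) (hg : IsNoncrossingPairing a b g)
include hf hg

variable (h : (disagreement f g).ncard = 4)
include h

lemma apply_apply_comm (hne : f a ≠ g a) : g (f a) = f (g a) :=
  apply_apply_comm_of_ncard_eq_four hf.involutive hg.involutive
    (hf.apply_eq_self_iff_apply_eq_self hg) h hne

variable (hlt : f a < g a)
include hlt

lemma apply_left_lt_apply_apply : f a < f (g a) ∧ f (g a) < g a := by
  have hcomm := hf.apply_apply_comm hg h hlt.ne
  have ha_lt : a < f a := by
    grind [hf.outside_or_inside a, hg.outside_or_inside a]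
  have hc_lt := hg.noncrossing ha_lt hlt
  refine ⟨lt_of_not_ge fun hle => ?_, hcomm ▸ hc_lt⟩
  have := hg.lt_apply ha_lt hlt
  have := @hf.noncrossing a (f (g a))
  have := hf.involutive (g a)
  have := hf.involutive a
  grind

lemma apply_lt_apply_apply_of_lt {x : ℕ} (hx : x < f (g a)) : f x < f (g a) := by
  have hcomm := hf.apply_apply_comm hg h hlt.ne
  have hc := hf.apply_left_lt_apply_apply hg h hlt
  have inv_a := hf.involutive a
  have hx_cases := hf.outside_or_inside x
  rcases lt_or_ge x a with hxa | hxa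
  · omega
  rcases hxa.eq_or_lt with rfl | hxa
  · exact hc.1
  rcases lt_trichotomy x (f a) with hxfa | rfl | hxfa
  · exact (hf.noncrossing hxa hxfa).trans hc.1
  · omega
  · have h_agree : f x = g x := by
      by_contra hne
      have := (disagreement_eq_insert hf.involutive hg.involutive
        (hf.apply_eq_self_iff_apply_eq_self hg) h hlt.ne).subset hne
      simp only [Set.mem_insert_iff, Set.mem_singleton_iff] at this
      omega
    have := hg.noncrossing hxfa (hcomm ▸ hx)
    omega

end Neighbors

end IsNoncrossingPairing

end NoncrossingPairings

section Counting

open Finset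

lemma finite_setOf_isNoncrossingPairing (a b : ℕ) : {f | IsNoncrossingPairing a b f}.Finite := by
  refine Set.Finite.of_injOn (f := fun f (x : Fin b) => f x)
    (t := Set.univ.pi fun _ => Set.Iio b) (fun f hf x _ => ?_) (fun f hf g hg hfg => ?_)
    (Set.Finite.pi fun _ => Set.finite_Iio b)
  · have := hf.outside_or_inside x
    grind
  · funext x
    rcases lt_or_ge x b with hx | hx
    · exact congrFun hfg ⟨x, hx⟩
    · rw [(hf.apply_eq_self_iff x).2 (.inr hx), (hg.apply_eq_self_iff x).2 (.inr hx)]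

/-- The finite set of non-crossing pair partitions of the interval `{x | a ≤ x ∧ x < b}`. -/
noncomputable def pairings (a b : ℕ) : Finset (ℕ → ℕ) :=
  (finite_setOf_isNoncrossingPairing a b).toFinset

/-- The finite set of ordered pairs of non-crossing pair partitions of `{x | a ≤ x ∧ x < b}` at
loop distance one, expressed as having exactly four points with different partners. -/
noncomputable def neighbors (a b : ℕ) : Finset ((ℕ → ℕ) × (ℕ → ℕ)) :=
  {fg ∈ pairings a b ×ˢ pairings a b | (disagreement fg.1 fg.2).ncard = 4}

variable {a b c : ℕ} {f g f' g' : ℕ → ℕ}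

lemma mem_pairings : f ∈ pairings a b ↔ IsNoncrossingPairing a b f := by
  simp [pairings]

lemma mem_neighbors : (f, g) ∈ neighbors a b ↔
    IsNoncrossingPairing a b f ∧ IsNoncrossingPairing a b g ∧ (disagreement f g).ncard = 4 := by
  simp [neighbors, mem_pairings, and_assoc]

lemma pairings_eq_singleton (hba : b ≤ a) : pairings a b = {id} := by
  ext f
  rw [mem_pairings, mem_singleton]
  refine ⟨fun hf => hf.eq_id hba, ?_⟩
  rintro rfl
  exact ⟨fun _ => rfl, fun x => by simp; omega, fun x y hxy hy => (hxy.asymm hy).elim⟩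

lemma neighbors_eq_empty (hba : b ≤ a) : neighbors a b = ∅ := by
  rw [neighbors, pairings_eq_singleton hba]
  simp [disagreement_self, filter_singleton]

lemma bijOn_nest (hac : a < c) (hcb : c < b) :
    Set.BijOn (fun fg : (ℕ → ℕ) × (ℕ → ℕ) => nest a c fg.1 fg.2)
      (pairings (a + 1) c ×ˢ pairings (c + 1) b : Finset _)
      ({f ∈ pairings a b | f a = c} : Finset _) := by
  refine Set.InvOn.bijOn (f' := fun f => (restrict (a + 1) c f, restrict (c + 1) b f))
    ⟨?_, ?_⟩ ?_ ?_ <;>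
  simp only [Set.LeftInvOn, Set.MapsTo, coe_product, coe_filter, mem_pairings, Set.mem_prod,
    mem_coe, Prod.forall]
  · exact fun f g ⟨hf, hg⟩ => Prod.ext hf.restrict_below_nest (hg.restrict_after_nest hac)
  · rintro f ⟨hf, rfl⟩
    exact hf.nest_restrict (by omega)
  · exact fun f g ⟨hf, hg⟩ => ⟨hf.nest hac hcb hg, by simp [nest]⟩
  · rintro f ⟨hf, rfl⟩
    exact ⟨hf.restrict_below (by omega), hf.restrict_after (by omega)⟩

lemma card_pairings (hab : a < b) :
    #(pairings a b) = ∑ c ∈ Ioo a b, #(pairings (a + 1) c) * #(pairings (c + 1) b) := by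
  rw [card_eq_sum_card_fiberwise (f := fun f => f a) (t := Ioo a b)]
  · refine sum_congr rfl fun c hc => ?_
    rw [mem_Ioo] at hc
    rw [← card_product, (bijOn_nest hc.1 hc.2).finsetCard_eq]
  · intro f hf
    simpa using (mem_pairings.1 hf).apply_left hab

lemma mem_filter_neighbors_apply_left_eq :
    (f, g) ∈ {fg ∈ neighbors a b | fg.1 a = c ∧ fg.2 a = c} ↔
      f ∈ {f ∈ pairings a b | f a = c} ∧ g ∈ {f ∈ pairings a b | f a = c} ∧
        (disagreement f g).ncard = 4 := by
  simp only [mem_filter, mem_neighbors, mem_pairings]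
  tauto

open Classical in
/-- The pairs of neighbors with a common arc from `a` to `c`, each given by its two parts below the
arc and its two parts to the right of it: one of these two pairs consists of neighbors, and the
other one of equal pairings. -/
noncomputable def nestedNeighbors (a c b : ℕ) :
    Finset (((ℕ → ℕ) × (ℕ → ℕ)) × ((ℕ → ℕ) × (ℕ → ℕ))) :=
  neighbors (a + 1) c ×ˢ (pairings (c + 1) b).diag ∪
    (pairings (a + 1) c).diag ×ˢ neighbors (c + 1) b

lemma mem_nestedNeighbors (hac : a < c) :
    ((f, f'), (g, g')) ∈ nestedNeighbors a c b ↔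
      (f, g) ∈ pairings (a + 1) c ×ˢ pairings (c + 1) b ∧
        (f', g') ∈ pairings (a + 1) c ×ˢ pairings (c + 1) b ∧
          (disagreement (nest a c f g) (nest a c f' g')).ncard = 4 := by
  simp only [nestedNeighbors, mem_union, mem_product, mem_neighbors, mem_diag, mem_pairings]
  grind [IsNoncrossingPairing.ncard_disagreement_nest_eq_four_iff]

lemma card_nestedNeighbors (a c b : ℕ) :
    #(nestedNeighbors a c b) =
      #(neighbors (a + 1) c) * #(pairings (c + 1) b) +
        #(pairings (a + 1) c) * #(neighbors (c + 1) b) := by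
  classical
  rw [nestedNeighbors, card_union_of_disjoint, card_product, card_product, diag_card, diag_card]
  refine disjoint_left.2 ?_
  rintro ⟨⟨f, f'⟩, g, g'⟩ h h'
  simp only [mem_product, mem_neighbors, mem_diag] at h h'
  obtain ⟨rfl, -⟩ := h'.1.2
  simp [disagreement_self] at h

lemma card_nestedNeighbors_eq_card_filter (hac : a < c) (hcb : c < b) :
    #(nestedNeighbors a c b) = #{fg ∈ neighbors a b | fg.1 a = c ∧ fg.2 a = c} := by
  have h_bij := bijOn_nest hac hcb
  refine card_nbij (fun fg => (nest a c fg.1.1 fg.2.1, nest a c fg.1.2 fg.2.2)) ?_ ?_ ?_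
  · rintro ⟨⟨f, f'⟩, g, g'⟩ h
    obtain ⟨hfg, hfg', h⟩ := (mem_nestedNeighbors hac).1 h
    exact mem_filter_neighbors_apply_left_eq.2 ⟨h_bij.mapsTo hfg, h_bij.mapsTo hfg', h⟩
  · rintro ⟨⟨f₁, f₁'⟩, g₁, g₁'⟩ h₁ ⟨⟨f₂, f₂'⟩, g₂, g₂'⟩ h₂ heq
    obtain ⟨hfg₁, hfg₁', -⟩ := (mem_nestedNeighbors hac).1 h₁
    obtain ⟨hfg₂, hfg₂', -⟩ := (mem_nestedNeighbors hac).1 h₂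
    rw [Prod.mk.injEq] at heq
    have := h_bij.injOn hfg₁ hfg₂ heq.1
    have := h_bij.injOn hfg₁' hfg₂' heq.2
    grind
  · rintro ⟨p, p'⟩ h
    obtain ⟨hp, hp', h⟩ := mem_filter_neighbors_apply_left_eq.1 h
    obtain ⟨⟨f, g⟩, hfg, rfl⟩ := h_bij.surjOn hp
    obtain ⟨⟨f', g'⟩, hfg', rfl⟩ := h_bij.surjOn hp'
    exact ⟨((f, f'), (g, g')), (mem_nestedNeighbors hac).2 ⟨hfg, hfg', h⟩, rfl⟩

lemma bijOn_swapPartners_concat (hac : a < c) (hcb : c < b) :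
    Set.BijOn (fun fg : (ℕ → ℕ) × (ℕ → ℕ) =>
        (concat c fg.1 fg.2, swapPartners (concat c fg.1 fg.2) a c))
      (pairings a c ×ˢ pairings c b : Finset _)
      ({fg ∈ neighbors a b | fg.1 a < fg.2 a ∧ fg.1 (fg.2 a) = c} : Finset _) := by
  refine Set.InvOn.bijOn (f' := fun fg => (restrict a c fg.1, restrict c b fg.1))
    ⟨?_, ?_⟩ ?_ ?_ <;>
  simp only [Set.LeftInvOn, Set.MapsTo, coe_product, mem_pairings, mem_neighbors, Set.mem_prod,
    mem_coe, Prod.forall, mem_filter]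
  · exact fun f g ⟨hf, hg⟩ => Prod.ext hf.restrict_left_concat hg.restrict_right_concat
  · rintro f g ⟨⟨hf, hg, h⟩, hlt, rfl⟩
    rw [hf.concat_restrict]
    exact Prod.ext rfl (eq_swapPartners hf.involutive hg.involutive
      (hf.apply_eq_self_iff_apply_eq_self hg) h hlt.ne).symm
  · intro f g ⟨hf, hg⟩
    have hh := hf.concat hac.le hcb.le hg
    have ha : concat c f g a < c := by grind [concat, hf.outside_or_inside a]
    have hc : c < concat c f g c := by grind [concat, hg.outside_or_inside c]
    have swap_a : swapPartners (concat c f g) a c a = concat c f g c := by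
      grind [swapPartners]
    refine ⟨⟨hh, hh.swapPartners hac hcb fun x hx => ?_, ?_⟩, ?_, ?_⟩
    · grind [concat, hf.outside_or_inside x]
    · exact ncard_disagreement_swapPartners hh.involutive
        (hh.apply_left (hac.trans hcb)).1.ne' hc.ne' ha.ne hac.ne
    · exact swap_a ▸ ha.trans hc
    · rw [swap_a, hh.involutive]
  · rintro f g ⟨⟨hf, hg, h⟩, hlt, rfl⟩
    have hc {x} := hf.apply_lt_apply_apply_of_lt hg h hlt (x := x)
    exact ⟨hf.restrict_left hcb.le fun _ => hc, hf.restrict_right hac.le fun _ => hc⟩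

lemma card_filter_neighbors_apply_left_eq (hab : a < b) :
    #{fg ∈ neighbors a b | fg.1 a = fg.2 a} =
      ∑ c ∈ Ioo a b, (#(neighbors (a + 1) c) * #(pairings (c + 1) b) +
        #(pairings (a + 1) c) * #(neighbors (c + 1) b)) := by
  rw [card_eq_sum_card_fiberwise (f := fun fg => fg.1 a) (t := Ioo a b)]
  · refine sum_congr rfl fun c hc => ?_
    rw [mem_Ioo] at hc
    rw [filter_filter, ← card_nestedNeighbors, card_nestedNeighbors_eq_card_filter hc.1 hc.2]
    exact congrArg card (filter_congr fun fg _ => by grind)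
  · rintro ⟨f, g⟩ hfg
    have hf := (mem_neighbors.1 (mem_filter.1 (mem_coe.1 hfg)).1).1
    simpa using hf.apply_left hab

lemma card_filter_neighbors_apply_left_lt (hab : a < b) :
    #{fg ∈ neighbors a b | fg.1 a < fg.2 a} =
      ∑ c ∈ Ioo a b, #(pairings a c) * #(pairings c b) := by
  rw [card_eq_sum_card_fiberwise (f := fun fg => fg.1 (fg.2 a)) (t := Ioo a b)]
  · refine sum_congr rfl fun c hc => ?_
    rw [mem_Ioo] at hc
    rw [filter_filter, ← card_product, (bijOn_swapPartners_concat hc.1 hc.2).finsetCard_eq]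
  · rintro ⟨f, g⟩ hfg
    obtain ⟨hmem, hlt⟩ := mem_filter.1 (mem_coe.1 hfg)
    obtain ⟨hf, hg, h⟩ := mem_neighbors.1 hmem
    have := hf.apply_left_lt_apply_apply hg h hlt
    have := hf.apply_left hab
    have := hg.apply_left hab
    exact mem_coe.2 (mem_Ioo.2 (by dsimp only; omega))

lemma card_filter_neighbors_apply_left_gt (a b : ℕ) :
    #{fg ∈ neighbors a b | fg.2 a < fg.1 a} = #{fg ∈ neighbors a b | fg.1 a < fg.2 a} := by
  refine card_nbij' Prod.swap Prod.swap ?_ ?_ (fun _ _ => rfl) (fun _ _ => rfl) <;>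
  rintro ⟨f, g⟩ hfg <;>
  simp only [coe_filter, mem_neighbors, Set.mem_ofPred_eq, Prod.swap] at hfg ⊢ <;>
  rw [disagreement_comm] <;>
  tauto

lemma card_neighbors (hab : a < b) :
    #(neighbors a b) = ∑ c ∈ Ioo a b, (#(neighbors (a + 1) c) * #(pairings (c + 1) b) +
      #(pairings (a + 1) c) * #(neighbors (c + 1) b)) +
        2 * ∑ c ∈ Ioo a b, #(pairings a c) * #(pairings c b) := by
  have h_split : #(neighbors a b) = #{fg ∈ neighbors a b | fg.1 a = fg.2 a} +
      (#{fg ∈ neighbors a b | fg.1 a < fg.2 a} + #{fg ∈ neighbors a b | fg.2 a < fg.1 a}) := by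
    rw [card_eq_sum_ones, card_filter, card_filter, card_filter, ← sum_add_distrib,
      ← sum_add_distrib]
    refine sum_congr rfl fun fg _ => ?_
    split_ifs <;> omega
  rw [h_split, card_filter_neighbors_apply_left_gt, card_filter_neighbors_apply_left_lt hab,
    card_filter_neighbors_apply_left_eq hab, two_mul]

lemma card_pairings_add_right (a b d : ℕ) : #(pairings (a + d) (b + d)) = #(pairings a b) := by
  induction h : b - a using Nat.strong_induction_on generalizing a b with | _ n ih
  rcases le_or_gt b a with hba | hab
  · rw [pairings_eq_singleton hba, pairings_eq_singleton (by omega), card_singleton]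
  rw [card_pairings hab, card_pairings (by omega), ← map_add_right_Ioo, sum_map]
  refine sum_congr rfl fun c hc => ?_
  rw [mem_Ioo] at hc
  simp only [addRightEmbedding_apply, Nat.add_right_comm _ d 1]
  rw [ih (c - (a + 1)) (by omega) _ _ rfl, ih (b - (c + 1)) (by omega) _ _ rfl]

lemma card_neighbors_add_right (a b d : ℕ) : #(neighbors (a + d) (b + d)) = #(neighbors a b) := by
  induction h : b - a using Nat.strong_induction_on generalizing a b with | _ n ih
  rcases le_or_gt b a with hba | hab
  · rw [neighbors_eq_empty hba, neighbors_eq_empty (by omega), card_empty]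
  rw [card_neighbors hab, card_neighbors (by omega), ← map_add_right_Ioo, sum_map, sum_map]
  simp only [addRightEmbedding_apply, card_pairings_add_right, Nat.add_right_comm _ d 1]
  congr 1
  refine sum_congr rfl fun c hc => ?_
  rw [mem_Ioo] at hc
  rw [ih (c - (a + 1)) (by omega) _ _ rfl, ih (b - (c + 1)) (by omega) _ _ rfl]

lemma card_pairings_eq_card_pairings_zero (a b : ℕ) :
    #(pairings a b) = #(pairings 0 (b - a)) := by
  rcases le_total a b with hab | hba
  · simpa [hab] using card_pairings_add_right 0 (b - a) a
  · rw [pairings_eq_singleton hba, pairings_eq_singleton (by omega)]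

lemma card_neighbors_eq_card_neighbors_zero (a b : ℕ) :
    #(neighbors a b) = #(neighbors 0 (b - a)) := by
  rcases le_total a b with hab | hba
  · simpa [hab] using card_neighbors_add_right 0 (b - a) a
  · rw [neighbors_eq_empty hba, neighbors_eq_empty (by omega)]

end Counting

section IntervalSeries

open PowerSeries
open scoped Finset

section Semiring

variable {R : Type*} [Semiring R]

lemma coeff_mul_eq_sum_Ioo {φ ψ : PowerSeries R} (hφ : constantCoeff φ = 0)
    (hψ : constantCoeff ψ = 0) (n : ℕ) :
    coeff n (φ * ψ) = ∑ c ∈ Finset.Ioo 0 n, coeff c φ * coeff (n - c) ψ := by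
  rw [← coeff_zero_eq_constantCoeff_apply] at hφ hψ
  rw [coeff_mul, Finset.Nat.sum_antidiagonal_eq_sum_range_succ_mk]
  refine (Finset.sum_subset (fun c hc => ?_) fun c hc hc' => ?_).symm
  · simp only [Finset.mem_Ioo, Finset.mem_range] at hc ⊢
    omega
  · simp only [Finset.mem_Ioo, Finset.mem_range] at hc hc'
    obtain rfl | rfl : c = 0 ∨ c = n := by omega
    · rw [hφ, zero_mul]
    · rw [Nat.sub_self, hψ, mul_zero]

lemma coeff_X_mul_mul_X_mul (φ ψ : PowerSeries R) (n : ℕ) :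
    coeff n (X * φ * (X * ψ)) =
      ∑ c ∈ Finset.Ioo 0 n, coeff (c - (0 + 1)) φ * coeff (n - (c + 1)) ψ := by
  rw [coeff_mul_eq_sum_Ioo (by simp) (by simp)]
  refine Finset.sum_congr rfl fun c hc => ?_
  rw [Finset.mem_Ioo] at hc
  obtain ⟨i, rfl⟩ := Nat.exists_eq_add_of_lt hc.1
  obtain ⟨j, rfl⟩ := Nat.exists_eq_add_of_lt hc.2
  rw [add_assoc _ j 1, Nat.add_sub_cancel_left, coeff_succ_X_mul, coeff_succ_X_mul]
  congr! 3
  omega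

end Semiring

variable (R : Type*) [CommRing R]

/-- The generating series of the non-crossing pair partitions of intervals, by number of points. -/
noncomputable def pairingGF : PowerSeries R := mk fun n => (#(pairings 0 n) : R)

/-- The generating series of the pairs of neighboring non-crossing pair partitions of intervals,
by number of points. -/
noncomputable def intervalNeighborGF : PowerSeries R := mk fun n => (#(neighbors 0 n) : R)

variable {R}

lemma coeff_sub_one_mul_sub_one {φ ψ : PowerSeries R} (hφ : constantCoeff φ = 1)
    (hψ : constantCoeff ψ = 1) (n : ℕ) :
    coeff n ((φ - 1) * (ψ - 1)) = ∑ c ∈ Finset.Ioo 0 n, coeff c φ * coeff (n - c) ψ := by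
  rw [coeff_mul_eq_sum_Ioo (by simp [hφ]) (by simp [hψ])]
  refine Finset.sum_congr rfl fun c hc => ?_
  rw [Finset.mem_Ioo] at hc
  simp [coeff_one, hc.1.ne', Nat.sub_ne_zero_of_lt hc.2]

variable (R)

lemma constantCoeff_pairingGF : constantCoeff (pairingGF R) = 1 := by
  rw [← coeff_zero_eq_constantCoeff_apply, pairingGF, coeff_mk, pairings_eq_singleton le_rfl,
    Finset.card_singleton, Nat.cast_one]

lemma constantCoeff_intervalNeighborGF : constantCoeff (intervalNeighborGF R) = 0 := by
  rw [← coeff_zero_eq_constantCoeff_apply, intervalNeighborGF, coeff_mk,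
    neighbors_eq_empty le_rfl, Finset.card_empty, Nat.cast_zero]

lemma pairingGF_eq_one_add : pairingGF R = 1 + X * pairingGF R * (X * pairingGF R) := by
  ext n
  rcases n.eq_zero_or_pos with rfl | hn
  · simp [constantCoeff_pairingGF]
  · rw [map_add, coeff_X_mul_mul_X_mul, coeff_one, if_neg hn.ne', zero_add]
    simp only [pairingGF, coeff_mk]
    rw [card_pairings hn]
    push_cast
    simp only [card_pairings_eq_card_pairings_zero (_ + 1)]

lemma intervalNeighborGF_eq_add : intervalNeighborGF R =
    X * intervalNeighborGF R * (X * pairingGF R) + X * pairingGF R * (X * intervalNeighborGF R) +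
      2 * ((pairingGF R - 1) * (pairingGF R - 1)) := by
  ext n
  rcases n.eq_zero_or_pos with rfl | hn
  · simp [constantCoeff_pairingGF, constantCoeff_intervalNeighborGF]
  · rw [map_add, map_add, two_mul, map_add, ← two_mul, coeff_X_mul_mul_X_mul,
      coeff_X_mul_mul_X_mul,
      coeff_sub_one_mul_sub_one (constantCoeff_pairingGF R) (constantCoeff_pairingGF R)]
    simp only [pairingGF, intervalNeighborGF, coeff_mk]
    rw [card_neighbors hn, Finset.sum_add_distrib]
    push_cast
    simp only [card_pairings_eq_card_pairings_zero (_ + 1),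
      card_neighbors_eq_card_neighbors_zero (_ + 1), card_pairings_eq_card_pairings_zero _ n]

variable {R} in
lemma eq_zero_of_eq_X_mul_mul {φ ψ : PowerSeries R} (h : φ = X * ψ * φ) : φ = 0 := by
  have h_unit : IsUnit (1 - X * ψ) := by simp [isUnit_iff_constantCoeff]
  rw [← h_unit.mul_right_eq_zero]
  linear_combination h

lemma expand_catalanGF : expand 2 two_ne_zero (catalanGF R) = pairingGF R := by
  have hC := congrArg (expand 2 two_ne_zero) (catalanGF_eq_one_add R)
  simp only [map_add, map_mul, map_pow, map_one, expand_X] at hC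
  rw [← sub_eq_zero]
  apply eq_zero_of_eq_X_mul_mul (ψ := X * (expand 2 two_ne_zero (catalanGF R) + pairingGF R))
  linear_combination hC - pairingGF_eq_one_add R

lemma expand_neighborGF : expand 2 two_ne_zero (neighborGF R) = intervalNeighborGF R := by
  have hN := congrArg (expand 2 two_ne_zero) (neighborGF_eq_add R)
  simp only [map_add, map_sub, map_mul, map_pow, map_one, map_ofNat, expand_X,
    expand_catalanGF] at hN
  rw [← sub_eq_zero]
  apply eq_zero_of_eq_X_mul_mul (ψ := 2 * X * pairingGF R)
  linear_combination hN - intervalNeighborGF_eq_add R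

lemma coeff_neighborGF (k : ℕ) : coeff k (neighborGF R) = #(neighbors 0 (2 * k)) := by
  rw [← coeff_expand_mul 2 two_ne_zero, expand_neighborGF, intervalNeighborGF, coeff_mk]

end IntervalSeries

section Diagrams

variable {k : ℕ}

namespace NCPair

/-- The involution of `ℕ` given by a diagram on `{x | x < 2 * k}` and by the identity elsewhere. -/
def extend (p : NCPair k) (x : ℕ) : ℕ := if hx : x < 2 * k then p.1 ⟨x, hx⟩ else x

lemma extend_coe (p : NCPair k) (x : Fin (2 * k)) : p.extend x = p.1 x := by
  simp [extend]

lemma extend_of_le (p : NCPair k) {x : ℕ} (hx : 2 * k ≤ x) : p.extend x = x := by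
  simp [extend, hx]

lemma involutive_extend (p : NCPair k) : Function.Involutive p.extend := fun x => by
  rcases lt_or_ge x (2 * k) with hx | hx
  · lift x to Fin (2 * k) using hx
    rw [extend_coe, extend_coe, p.2.1]
  · rw [p.extend_of_le hx, p.extend_of_le hx]

lemma isNoncrossingPairing_extend (p : NCPair k) : IsNoncrossingPairing 0 (2 * k) p.extend where
  involutive := p.involutive_extend
  apply_eq_self_iff x := by
    rcases lt_or_ge x (2 * k) with hx | hx
    · lift x to Fin (2 * k) using hx
      simp [extend_coe, Fin.val_inj, p.2.2.1]
    · simp [p.extend_of_le hx, hx]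
  noncrossing x y hxy hy := by
    have hx : x < 2 * k := by
      by_contra! hx
      rw [p.extend_of_le hx] at hy
      omega
    lift x to Fin (2 * k) using hx
    rw [extend_coe] at hy ⊢
    lift y to Fin (2 * k) using hy.trans (p.1 x).2
    rw [extend_coe]
    refine lt_of_le_of_ne (not_lt.1 fun h => p.2.2.2 x y _ _ hxy hy h rfl rfl) fun h => ?_
    exact hxy.ne' (congrArg Fin.val (p.1.injective (Fin.ext h)))

lemma extend_injective : Function.Injective (extend (k := k)) := fun p q h =>
  Subtype.ext <| Equiv.ext fun x => Fin.ext <| by rw [← extend_coe, ← extend_coe, h]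

lemma exists_extend_eq {f : ℕ → ℕ} (hf : IsNoncrossingPairing 0 (2 * k) f) :
    ∃ p : NCPair k, p.extend = f := by
  have hlt (x : Fin (2 * k)) : f x < 2 * k := by
    have := hf.outside_or_inside x
    omega
  let p : Fin (2 * k) → Fin (2 * k) := fun x => ⟨f x, hlt x⟩
  have hp : Function.Involutive p := fun x => Fin.ext (hf.involutive x)
  refine ⟨⟨hp.toPerm, hp, fun x hx => ?_, ?_⟩, funext fun x => ?_⟩
  · have := (hf.apply_eq_self_iff x).1 (congrArg Fin.val hx)
    omega
  · rintro x y _ _ hxy hyx hlt rfl rfl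
    exact hlt.asymm (hf.noncrossing hxy hyx)
  · rcases lt_or_ge x (2 * k) with hx | hx
    · lift x to Fin (2 * k) using hx
      exact extend_coe _ x
    · exact (extend_of_le _ hx).trans ((hf.apply_eq_self_iff x).2 (.inr hx)).symm

lemma disagreement_extend (p q : NCPair k) :
    disagreement p.extend q.extend = Fin.val '' disagreement p.1 q.1 := by
  ext x
  rcases lt_or_ge x (2 * k) with hx | hx
  · lift x to Fin (2 * k) using hx
    rw [Fin.val_injective.mem_set_image, mem_disagreement, mem_disagreement, extend_coe,
      extend_coe, Ne, Fin.val_inj]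
  · simp only [mem_disagreement, p.extend_of_le hx, q.extend_of_le hx, Set.mem_image]
    grind

lemma loopDist_eq_one_iff (p q : NCPair k) :
    loopDist p q = 1 ↔ (disagreement p.extend q.extend).ncard = 4 := by
  rw [disagreement_extend, Set.ncard_image_of_injective _ Fin.val_injective,
    ← card_eq_two_mul_card_loop_add_one_iff p.2.1 q.2.1 p.2.2.1 q.2.2.1, Nat.card_fin, loopDist,
    show loops p q = Nat.card (Loop p.1 q.1) from rfl]
  omega

end NCPair

lemma image_extend_setOf_loopDist_eq_one :
    Prod.map NCPair.extend NCPair.extend '' {pq : NCPair k × NCPair k | loopDist pq.1 pq.2 = 1} =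
      neighbors 0 (2 * k) := by
  ext ⟨f, g⟩
  rw [Finset.mem_coe, mem_neighbors, Set.mem_image]
  constructor
  · rintro ⟨⟨p, q⟩, h, heq⟩
    obtain ⟨rfl, rfl⟩ := Prod.mk.inj heq
    exact ⟨p.isNoncrossingPairing_extend, q.isNoncrossingPairing_extend,
      (p.loopDist_eq_one_iff q).1 h⟩
  · rintro ⟨hf, hg, h⟩
    obtain ⟨p, rfl⟩ := NCPair.exists_extend_eq hf
    obtain ⟨q, rfl⟩ := NCPair.exists_extend_eq hg
    exact ⟨(p, q), (p.loopDist_eq_one_iff q).2 h, rfl⟩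

lemma Ncount_eq_card_neighbors (k : ℕ) : Ncount k = (neighbors 0 (2 * k)).card := by
  rw [← Set.ncard_coe_finset, ← image_extend_setOf_loopDist_eq_one,
    Set.ncard_image_of_injective _ (NCPair.extend_injective.prodMap NCPair.extend_injective)]
  rfl

end Diagrams

/-- For |z| < 1/2, the generating series of the neighbor counts N_k satisfies
∑_{k=0}^∞ N_k · z^{2k} = 32z⁴ / ((1 + √(1 − 4z²))⁴ √(1 − 4z²)). -/
theorem neighbor_generating_series (z : ℝ) (hz : |z| < 1 / 2) :
    HasSum (fun k : ℕ => (Ncount k : ℝ) * z ^ (2 * k))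
      (32 * z ^ 4 /
        ((1 + Real.sqrt (1 - 4 * z ^ 2)) ^ 4 * Real.sqrt (1 - 4 * z ^ 2))) := by
  have hz_sq : z ^ 2 < 1 / 4 := by
    rw [← sq_abs, show (1 / 4 : ℝ) = (1 / 2) ^ 2 by norm_num]
    gcongr
  have h := (hasAbsSumAt_neighborGF (sq_nonneg z) hz_sq).hasSum
  simpa only [coeff_neighborGF, ← Ncount_eq_card_neighbors, ← pow_mul] using h
end
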